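/- arXiv:1006.0590 — 2 statements merged into one kernel-verified Lean document; each statement's English description precedes it below -/
import Mathlib

section
/- For every η ∈ (0, 1) there exists τ with 0 < τ < 1 such that for every ν with 0 < ν ≤ τ there exists an integer n₀ such that the following holds: every digraph G on n ≥ n₀ vertices with minimum semidegree δ⁰(G) ≥ ηn which is a robust (ν, τ)-outexpander contains a Hamilton cycle. -/
/-- The outdegree of a vertex `x` in the digraph with adjacency relation `G`. -/
noncomputable def outDeg {V : Type*} (G : V → V → Prop) (x : V) : ℕ :=
  Nat.card {y : V // G x y}

/-- The indegree of a vertex `x` in the digraph with adjacency relation `G`. -/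
noncomputable def inDeg {V : Type*} (G : V → V → Prop) (x : V) : ℕ :=
  Nat.card {y : V // G y x}

/-- `f` is a Hamilton cycle of the digraph `G`. -/
def IsHamCycle {V : Type*} [Fintype V] (G : V → V → Prop)
    (f : ZMod (Fintype.card V) → V) : Prop :=
  Function.Bijective f ∧ ∀ i, G (f i) (f (i + 1))

/-- The ν-robust outneighbourhood of `S`: all vertices with at least νn inneighbours in `S`. -/
def RobustOutNbhd {V : Type*} [Fintype V] (G : V → V → Prop) (ν : ℝ) (S : Set V) : Set V :=
  {x : V | ν * (Fintype.card V : ℝ) ≤ ({y ∈ S | G y x} : Set V).ncard}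

/-- `G` is a robust (ν, τ)-outexpander: |RN⁺_{ν,G}(S)| ≥ |S| + νn whenever τn < |S| < (1 − τ)n. -/
def RobustOutExpander {V : Type*} [Fintype V] (G : V → V → Prop) (ν τ : ℝ) : Prop :=
  ∀ S : Set V, τ * (Fintype.card V : ℝ) < (S.ncard : ℝ) →
    (S.ncard : ℝ) < (1 - τ) * (Fintype.card V : ℝ) →
    (S.ncard : ℝ) + ν * (Fintype.card V : ℝ) ≤ ((RobustOutNbhd G ν S).ncard : ℝ)

/-!
Among the 1-factors `σ` (they exist by Hall's theorem), take one whose partition into cycles is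
coarsest. If `σ` is not a Hamilton cycle, consider the digraph `H` in which `x → y` means
`G x (σ y)`. It is again a robust outexpander, and a permutation `π` along `H` turns `σ` into the
1-factor `σ * π`. Robust expansion makes a positive proportion of all sequences of a suitable
bounded length closed walks of `H` passing through a vertex off the cycle of `v`, an outneighbour of
`v` and an inneighbour of `v`, so by Erdős's theorem on complete multipartite hypergraphs `H`
contains a large blow-up of such a closed walk. Its classes can be thinned so that `σ` returns to
each class before meeting any other. Then `π` rotates along the blow-up with `v` inserted; choosing
the bijections between consecutive classes so as to merge the most cycles, it joins the cycle of `v`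
to another one and splits none.
-/

section PermutationCycles

open Function Equiv
open Equiv.Perm hiding Disjoint

variable {V I : Type*} {σ π ρ : Perm V}

theorem setoid_le_of_rel_apply {s : Setoid V} (h : ∀ x, s x (σ x)) :
    SameCycle.setoid σ ≤ s := by
  rintro x _ ⟨k, rfl⟩
  induction k with
  | zero => exact s.refl x
  | succ n ih => rw [add_comm, zpow_one_add, mul_apply]; exact s.trans ih (h _)
  | pred n ih =>
    refine s.trans ih (s.symm ?_)
    have hpred : σ ((σ ^ (-(n : ℤ) - 1)) x) = (σ ^ (-(n : ℤ))) x := by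
      rw [← mul_apply, ← zpow_one_add, add_sub_cancel]
    exact hpred ▸ h _

theorem sameCycle_apply_of_mul (x : V) : (σ * π).SameCycle (π⁻¹ x) (σ x) :=
  ⟨1, by simp⟩

theorem sameCycle_mul_swap [Finite V] [DecidableEq V] {p q : V} (h : ¬ ρ.SameCycle p q) :
    (ρ * swap p q).SameCycle p q := by
  have hstep : (ρ * swap p q).SameCycle p (ρ q) := ⟨1, by simp⟩
  have hreach : ∀ j : ℕ, (ρ * swap p q).SameCycle p ((ρ ^ (j + 1)) q) := by
    intro j
    induction j with
    | zero => simpa using hstep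
    | succ j ih =>
      rw [pow_succ', mul_apply]
      by_cases hq : (ρ ^ (j + 1)) q = q
      · rwa [hq]
      · have hp : (ρ ^ (j + 1)) q ≠ p := fun hp => h (SameCycle.symm ⟨(j + 1 : ℕ), mod_cast hp⟩)
        exact ih.trans ⟨1, by simp [swap_apply_of_ne_of_ne hp hq]⟩
  have := hreach (orderOf ρ - 1)
  rwa [Nat.sub_add_cancel (orderOf_pos ρ), pow_orderOf_eq_one, one_apply] at this

theorem setoid_lt_setoid_mul_swap [Finite V] [DecidableEq V] {p q : V}
    (h : ¬ ρ.SameCycle p q) :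
    SameCycle.setoid ρ < SameCycle.setoid (ρ * swap p q) := by
  have hpq := sameCycle_mul_swap h
  refine lt_of_le_not_ge (setoid_le_of_rel_apply fun z => ?_) fun hle => h (hle hpq)
  have hz : (ρ * swap p q).SameCycle (swap p q z) (ρ z) := by
    simpa using sameCycle_apply_of_mul (σ := ρ) (π := swap p q) z
  refine SameCycle.trans ?_ hz
  rcases eq_or_ne z p with rfl | hp
  · rwa [swap_apply_left]
  rcases eq_or_ne z q with rfl | hq
  · rw [swap_apply_right]; exact hpq.symm
  · rw [swap_apply_of_ne_of_ne hp hq]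

/-- The permutation `π` carries each class `A i` onto the class `B i` and fixes every point outside
the classes `A i`. Composing a 1-factor with such a `π` reroutes it at the classes only. -/
structure Transports (A B : I → Set V) (π : Perm V) : Prop where
  image_eq : ∀ i, π '' A i = B i
  apply_eq_self : ∀ x ∉ ⋃ i, A i, π x = x

namespace Transports

variable {A B : I → Set V}

theorem apply_mem (h : Transports A B π) {i : I} {x : V} (hx : x ∈ A i) : π x ∈ B i :=
  h.image_eq i ▸ Set.mem_image_of_mem π hx

theorem inv_apply_mem (h : Transports A B π) {i : I} {x : V} (hx : x ∈ B i) : π⁻¹ x ∈ A i := by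
  rw [← h.image_eq i] at hx
  obtain ⟨y, hy, rfl⟩ := hx
  simpa using hy

open scoped Pointwise in
theorem mul_swap [DecidableEq V] (h : Transports A B π) {p q : V} (hp : p ∈ ⋃ i, A i)
    (hpq : ∀ i, p ∈ A i ↔ q ∈ A i) : Transports A B (π * swap p q) where
  image_eq i := by
    have hswap : swap p q '' A i = A i :=
      MulAction.mem_stabilizer_iff.1 (swap_mem_stabilizer.2 (hpq i))
    rw [coe_mul, Set.image_comp, hswap, h.image_eq]
  apply_eq_self x hx := by
    have hq : q ∈ ⋃ i, A i := by simpa only [Set.mem_iUnion, hpq] using hp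
    rw [mul_apply, swap_apply_of_ne_of_ne (ne_of_mem_of_not_mem hp hx).symm
      (ne_of_mem_of_not_mem hq hx).symm, h.apply_eq_self x hx]

end Transports

variable {A B : I → Set V}

theorem sameCycle_pow_of_fixed (s : V) (k : ℕ)
    (h : ∀ l < k, π ((σ ^ (l + 1)) s) = (σ ^ (l + 1)) s) :
    (σ * π).SameCycle (π⁻¹ s) ((σ ^ (k + 1)) s) := by
  induction k with
  | zero => simpa using sameCycle_apply_of_mul (σ := σ) s
  | succ k ih =>
    refine (ih fun l hl => h l (hl.trans k.lt_succ_self)).trans ⟨1, ?_⟩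
    rw [zpow_one, mul_apply, h k k.lt_succ_self, pow_succ' σ (k + 1), mul_apply]

/-- A first return of `σ` from `B i` to `A (nxt i)` lies on one cycle of `σ * π`, which therefore
meets both `A i` and `A (nxt i)`. -/
theorem Transports.sameCycle_of_return (hπ : Transports A B π)
    (hcyc : ∀ i, ∀ p ∈ A i, ∀ q ∈ A i, (σ * π).SameCycle p q) {nxt : Perm I}
    (hnxt : ∀ i j, nxt.SameCycle i j)
    (hret : ∀ i, ∃ s ∈ B i, ∃ k, (σ ^ (k + 1)) s ∈ A (nxt i) ∧
      ∀ l < k, (σ ^ (l + 1)) s ∉ ⋃ i, A i) {x y : V}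
    (hx : x ∈ ⋃ i, A i) (hy : y ∈ ⋃ i, A i) : (σ * π).SameCycle x y := by
  choose s hs k hk hfree using hret
  let a (i : I) : V := π⁻¹ (s i)
  have ha (i : I) : a i ∈ A i := hπ.inv_apply_mem (hs i)
  have hle : SameCycle.setoid nxt ≤ (SameCycle.setoid (σ * π)).comap a := by
    refine setoid_le_of_rel_apply fun i => ?_
    have hreturn : (σ * π).SameCycle (a i) ((σ ^ (k i + 1)) (s i)) :=
      sameCycle_pow_of_fixed _ _ fun l hl => hπ.apply_eq_self _ (hfree i l hl)
    exact hreturn.trans (hcyc _ _ (hk i) _ (ha _))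
  obtain ⟨i, hi⟩ := Set.mem_iUnion.1 hx
  obtain ⟨j, hj⟩ := Set.mem_iUnion.1 hy
  have hij : (σ * π).SameCycle (a i) (a j) := hle (hnxt i j)
  exact ((hcyc i x hi _ (ha i)).trans hij).trans (hcyc j _ (ha j) y hj)

theorem Transports.setoid_le (hπ : Transports A B π) (hU : ⋃ i, B i = ⋃ i, A i)
    (hcyc : ∀ x ∈ ⋃ i, A i, ∀ y ∈ ⋃ i, A i, (σ * π).SameCycle x y) :
    SameCycle.setoid σ ≤ SameCycle.setoid (σ * π) := by
  refine setoid_le_of_rel_apply fun z => ?_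
  by_cases hz : z ∈ ⋃ i, A i
  · obtain ⟨j, hj⟩ := Set.mem_iUnion.1 (hU ▸ hz)
    exact (hcyc z hz _ (Set.mem_iUnion_of_mem j (hπ.inv_apply_mem hj))).trans
      (sameCycle_apply_of_mul z)
  · exact ⟨1, by simp [hπ.apply_eq_self z hz]⟩

theorem exists_transports [Finite V] (hA : Pairwise (Disjoint on A)) (hB : Pairwise (Disjoint on B))
    (hU : ⋃ i, A i = ⋃ i, B i) (hcard : ∀ i, (A i).ncard = (B i).ncard) :
    ∃ π, Transports A B π := by
  classical
  have e (i : I) : A i ≃ B i := (Finite.card_eq.1 (hcard i)).some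
  let f : Perm (⋃ i, A i) := (Set.unionEqSigmaOfDisjoint hA).trans <|
    (sigmaCongrRight e).trans <| (Set.unionEqSigmaOfDisjoint hB).symm.trans (setCongr hU.symm)
  have hf : ∀ i, ∀ x (hx : x ∈ A i), (f ⟨x, Set.mem_iUnion_of_mem i hx⟩ : V) = e i ⟨x, hx⟩ := by
    intro i x hx
    have : Set.unionEqSigmaOfDisjoint hA ⟨x, Set.mem_iUnion_of_mem i hx⟩ = ⟨i, x, hx⟩ := by
      rw [← Equiv.eq_symm_apply]; rfl
    simp only [f, Equiv.trans_apply, this]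
    rfl
  refine ⟨ofSubtype f, fun i => ?_, fun x hx => ofSubtype_apply_of_not_mem f hx⟩
  refine Set.eq_of_subset_of_ncard_le ?_ ?_
  · rintro _ ⟨x, hx, rfl⟩
    rw [ofSubtype_apply_of_mem f (Set.mem_iUnion_of_mem i hx), hf i x hx]
    exact (e i _).2
  · rw [Set.ncard_image_of_injective _ (ofSubtype f).injective, hcard]

theorem exists_transports_sameCycle [Finite V] (σ : Perm V) (hA : Pairwise (Disjoint on A))
    (hB : Pairwise (Disjoint on B)) (hU : ⋃ i, A i = ⋃ i, B i)
    (hcard : ∀ i, (A i).ncard = (B i).ncard) :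
    ∃ π, Transports A B π ∧ ∀ i, ∀ p ∈ A i, ∀ q ∈ A i, (σ * π).SameCycle p q := by
  classical
  obtain ⟨π, hπ, hmax⟩ := Set.Finite.exists_maximalFor (fun π => SameCycle.setoid (σ * π))
    {π : Perm V | Transports A B π} (Set.toFinite _) (exists_transports hA hB hU hcard)
  refine ⟨π, hπ, fun i p hp q hq => by_contra fun hpq => ?_⟩
  have hswap : Transports A B (π * swap p q) :=
    hπ.mul_swap (Set.mem_iUnion_of_mem i hp) fun j =>
      ⟨fun h => hA.eq (Set.not_disjoint_iff.2 ⟨p, h, hp⟩) ▸ hq,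
        fun h => hA.eq (Set.not_disjoint_iff.2 ⟨q, h, hq⟩) ▸ hp⟩
  have hlt := setoid_lt_setoid_mul_swap hpq
  rw [mul_assoc] at hlt
  exact hlt.not_ge (hmax hswap hlt.le)

/-- The family `W` with the extra point `v` put into the class of index `i₀`. -/
def adjoinAt (W : I → Set V) (v : V) (i₀ i : I) : Set V :=
  {x | x ∈ W i ∨ x = v ∧ i = i₀}

variable {W : I → Set V} {v : V}

theorem iUnion_adjoinAt (i₀ : I) : ⋃ i, adjoinAt W v i₀ i = insert v (⋃ i, W i) := by
  ext x
  simp only [adjoinAt, Set.mem_iUnion, Set.mem_ofPred_eq, Set.mem_insert_iff, exists_or,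
    exists_and_left, exists_eq, and_true]
  exact or_comm

theorem pairwise_disjoint_adjoinAt (hW : Pairwise (Disjoint on W)) (hv : ∀ i, v ∉ W i)
    (i₀ : I) : Pairwise (Disjoint on adjoinAt W v i₀) := by
  intro i j hij
  refine Set.disjoint_left.2 ?_
  rintro x (hi | ⟨rfl, rfl⟩) (hj | ⟨hx, rfl⟩)
  · exact Set.disjoint_left.1 (hW hij) hi hj
  · exact hv i (hx ▸ hi)
  · exact hv j hj
  · exact hij rfl

theorem ncard_adjoinAt [Finite V] [DecidableEq I] {i : I} (hv : v ∉ W i) (i₀ : I) :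
    (adjoinAt W v i₀ i).ncard = (W i).ncard + if i = i₀ then 1 else 0 := by
  rcases eq_or_ne i i₀ with rfl | hi
  · have : adjoinAt W v i i = insert v (W i) := by
      ext x; simp [adjoinAt, or_comm]
    rw [this, Set.ncard_insert_of_notMem hv, if_pos rfl]
  · simp [adjoinAt, hi]

theorem exists_transports_adjoinAt [Finite V] [DecidableEq I] (σ : Perm V) {nxt : Perm I}
    (hnxt : ∀ i j, nxt.SameCycle i j) (hW : Pairwise (Disjoint on W)) (hv : ∀ i, v ∉ W i)
    {i₁ i₂ : I} (hcard : ∀ i, ((W i).ncard + if i = i₁ then 1 else 0) =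
      (W (nxt i)).ncard + if i = i₂ then 1 else 0)
    (hret : ∀ i, ∃ s ∈ W i, ∃ k, (σ ^ (k + 1)) s ∈ W i ∧
      ∀ l < k, (σ ^ (l + 1)) s ∉ insert v (⋃ i, W i)) :
    ∃ π, Transports (adjoinAt W v i₁) (adjoinAt (W ∘ nxt) v i₂) π ∧
      SameCycle.setoid σ ≤ SameCycle.setoid (σ * π) ∧
      ∀ x ∈ ⋃ i, W i, (σ * π).SameCycle v x := by
  have hUA := iUnion_adjoinAt (W := W) (v := v) i₁
  have hUB : ⋃ i, adjoinAt (W ∘ nxt) v i₂ i = insert v (⋃ i, W i) := by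
    rw [iUnion_adjoinAt, ← nxt.surjective.iUnion_comp W, Function.comp_def]
  have hWnxt : Pairwise (Disjoint on (W ∘ nxt)) := hW.comp_of_injective nxt.injective
  obtain ⟨π, hπ, hcyc⟩ := exists_transports_sameCycle σ
    (pairwise_disjoint_adjoinAt hW hv i₁)
    (pairwise_disjoint_adjoinAt hWnxt (fun i => hv (nxt i)) i₂)
    (hUA.trans hUB.symm)
    (fun i => by
      rw [ncard_adjoinAt (hv i), ncard_adjoinAt (W := W ∘ nxt) (hv (nxt i)), hcard, comp_apply])
  have hmerge : ∀ x ∈ ⋃ i, adjoinAt W v i₁ i, ∀ y ∈ ⋃ i, adjoinAt W v i₁ i,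
      (σ * π).SameCycle x y := by
    refine fun x hx y hy => hπ.sameCycle_of_return hcyc hnxt (fun i => ?_) hx hy
    obtain ⟨s, hs, k, hk, hfree⟩ := hret (nxt i)
    exact ⟨s, Or.inl hs, k, Or.inl hk, hUA ▸ hfree⟩
  refine ⟨π, hπ, hπ.setoid_le (hUB.trans hUA.symm) hmerge, fun x hx => ?_⟩
  rw [hUA] at hmerge
  exact hmerge v (Set.mem_insert v _) x (Set.mem_insert_of_mem v hx)

end PermutationCycles

section CyclewiseOrder

open Equiv Equiv.Perm

variable {V : Type*} {σ : Perm V}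

/-- A chosen representative of the cycle of `σ` through `x`; it depends on that cycle only. -/
noncomputable def cycleRep (σ : Perm V) (x : V) : V :=
  (Quotient.mk (SameCycle.setoid σ) x).out

/-- The number of steps from the representative of the cycle of `x` to `x`. -/
noncomputable def cycleIndex (σ : Perm V) (x : V) : ℕ :=
  sInf {k : ℕ | (σ ^ k) (cycleRep σ x) = x}

theorem sameCycle_cycleRep (x : V) : σ.SameCycle (cycleRep σ x) x :=
  Quotient.mk_out (s := SameCycle.setoid σ) x

theorem cycleRep_eq_of_sameCycle {x y : V} (h : σ.SameCycle x y) :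
    cycleRep σ x = cycleRep σ y :=
  congrArg Quotient.out (Quotient.sound (s := SameCycle.setoid σ) h)

theorem pow_cycleIndex_apply [Finite V] (x : V) :
    (σ ^ cycleIndex σ x) (cycleRep σ x) = x :=
  Nat.sInf_mem (s := {k : ℕ | (σ ^ k) (cycleRep σ x) = x}) (sameCycle_cycleRep x).exists_nat_pow_eq

theorem cycleIndex_pow_apply [Finite V] {x : V} {k : ℕ} (hk : k ≤ cycleIndex σ x) :
    cycleIndex σ ((σ ^ k) (cycleRep σ x)) = k := by
  have hrep : cycleRep σ ((σ ^ k) (cycleRep σ x)) = cycleRep σ x :=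
    cycleRep_eq_of_sameCycle (sameCycle_pow_left.2 (sameCycle_cycleRep x))
  refine le_antisymm (Nat.sInf_le (congrArg _ hrep)) (not_lt.1 fun hlt => ?_)
  -- A representation of `σ ^ k r` by fewer steps would shorten the one of `x`.
  set m := cycleIndex σ ((σ ^ k) (cycleRep σ x)) with hm
  have hshort : (σ ^ (cycleIndex σ x - k + m)) (cycleRep σ x) = x := by
    have h := pow_cycleIndex_apply (σ := σ) ((σ ^ k) (cycleRep σ x))
    rw [hrep, ← hm] at h
    rw [pow_add, mul_apply, h, ← mul_apply, ← pow_add, Nat.sub_add_cancel hk,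
      pow_cycleIndex_apply]
  have : cycleIndex σ x ≤ cycleIndex σ x - k + m := Nat.sInf_le hshort
  omega

/-- A linear order in which every cycle of `σ` is an interval listed in the order in which `σ`
traverses it. -/
structure IsCyclewise [LinearOrder V] (σ : Perm V) : Prop where
  sameCycle_of_mem_Icc {x y z : V} : σ.SameCycle x z → y ∈ Set.Icc x z → σ.SameCycle x y
  exists_pow_eq {x y : V} : σ.SameCycle x y → x < y →
    ∃ k : ℕ, (σ ^ (k + 1)) x = y ∧ ∀ l ≤ k, (σ ^ (l + 1)) x ∈ Set.Icc x y

theorem exists_linearOrder_isCyclewise [Finite V] (σ : Perm V) :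
    ∃ _ : LinearOrder V, IsCyclewise σ := by
  obtain ⟨N, ⟨e⟩⟩ := Finite.exists_equiv_fin (Quotient (SameCycle.setoid σ))
  let c (x : V) : Fin N := e (Quotient.mk _ x)
  have hc {x y : V} : c x = c y ↔ σ.SameCycle x y := e.injective.eq_iff.trans Quotient.eq
  let key (x : V) : Fin N ×ₗ ℕ := toLex (c x, cycleIndex σ x)
  have hkey : Function.Injective key := fun x y hxy => by
    obtain ⟨hcxy, hi⟩ := Prod.mk.inj (toLex.injective hxy)
    rw [← pow_cycleIndex_apply (σ := σ) x, ← pow_cycleIndex_apply (σ := σ) y, hi,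
      cycleRep_eq_of_sameCycle (hc.1 hcxy)]
  let _ : LinearOrder V := LinearOrder.lift' key hkey
  have hle {x y : V} : x ≤ y ↔ c x < c y ∨ c x = c y ∧ cycleIndex σ x ≤ cycleIndex σ y :=
    Prod.Lex.toLex_le_toLex
  have hle' {x y : V} (h : σ.SameCycle x y) : x ≤ y ↔ cycleIndex σ x ≤ cycleIndex σ y := by
    rw [hle, hc.2 h]; simp
  refine ⟨‹_›, ⟨fun {x y z} hxz hy => hc.1 ?_, fun {x y} hxy hlt => ?_⟩⟩
  · have hmono {a b : V} (hab : a ≤ b) : c a ≤ c b := (hle.1 hab).elim le_of_lt fun h => h.1.le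
    exact le_antisymm (hmono hy.1) ((hmono hy.2).trans (hc.2 hxz).ge)
  · have hi : cycleIndex σ x < cycleIndex σ y := not_le.1 ((hle' hxy.symm).not.1 hlt.not_ge)
    have hpow (l : ℕ) : (σ ^ l) x = (σ ^ (cycleIndex σ x + l)) (cycleRep σ y) := by
      conv_lhs => rw [← pow_cycleIndex_apply (σ := σ) x, cycleRep_eq_of_sameCycle hxy]
      rw [← mul_apply, ← pow_add, add_comm]
    have hindex {l : ℕ} (hl : cycleIndex σ x + l ≤ cycleIndex σ y) :
        cycleIndex σ ((σ ^ l) x) = cycleIndex σ x + l := by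
      rw [hpow, cycleIndex_pow_apply hl]
    refine ⟨cycleIndex σ y - cycleIndex σ x - 1, ?_, fun l hl => ⟨?_, ?_⟩⟩
    · rw [hpow, show cycleIndex σ x + (cycleIndex σ y - cycleIndex σ x - 1 + 1) =
        cycleIndex σ y by omega, pow_cycleIndex_apply]
    · rw [hle' (sameCycle_pow_right.2 (SameCycle.refl _ _)), hindex (by omega)]
      omega
    · rw [hle' (sameCycle_pow_left.2 hxy), hindex (by omega)]
      omega

variable [LinearOrder V]

theorem IsCyclewise.exists_pow_mem_Icc [Finite V] (h : IsCyclewise σ) {x y z : V} (hxy : x < y)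
    (hyz : y < z) :
    ∃ s ∈ ({x, y} : Set V), ∃ k : ℕ, (σ ^ (k + 1)) s ∈ ({y, z} : Set V) ∧
      ∀ l ≤ k, (σ ^ (l + 1)) s ∈ Set.Icc x z := by
  by_cases hcxy : σ.SameCycle x y
  · obtain ⟨k, hk, hl⟩ := h.exists_pow_eq hcxy hxy
    exact ⟨x, by simp, k, by simp [hk], fun l hlk => Set.Icc_subset_Icc_right hyz.le (hl l hlk)⟩
  by_cases hcyz : σ.SameCycle y z
  · obtain ⟨k, hk, hl⟩ := h.exists_pow_eq hcyz hyz
    exact ⟨y, by simp, k, by simp [hk], fun l hlk => Set.Icc_subset_Icc_left hxy.le (hl l hlk)⟩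
  -- Otherwise the whole cycle of `y` lies strictly between `x` and `z`.
  refine ⟨y, by simp, orderOf σ - 1, ?_, fun l _ => ?_⟩
  · rw [Nat.sub_add_cancel (orderOf_pos σ), pow_orderOf_eq_one]; simp
  · have hw : σ.SameCycle y ((σ ^ (l + 1)) y) := sameCycle_pow_right.2 (SameCycle.refl _ _)
    refine ⟨le_of_not_ge fun hle => hcxy ?_, le_of_not_ge fun hle => hcyz ?_⟩
    · exact (h.sameCycle_of_mem_Icc hw.symm ⟨hle, hxy.le⟩).symm.trans hw.symm
    · exact h.sameCycle_of_mem_Icc hw ⟨hyz.le, hle⟩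

theorem IsCyclewise.exists_return [Finite V] (h : IsCyclewise σ) {W : Finset V} {T : Set V}
    (hW : 3 ≤ W.card) (hT : ∀ x ∈ W, ∀ z ∈ W, T ∩ Set.Icc x z ⊆ W) :
    ∃ s ∈ W, ∃ k : ℕ, (σ ^ (k + 1)) s ∈ W ∧ ∀ l < k, (σ ^ (l + 1)) s ∉ T := by
  let f := W.orderEmbOfCardLe hW
  have hf (i : Fin 3) : f i ∈ W := W.orderEmbOfCardLe_mem hW i
  obtain ⟨s, hs, r, hr, hIcc⟩ := h.exists_pow_mem_Icc
    (f.lt_iff_lt.2 (by decide : (0 : Fin 3) < 1)) (f.lt_iff_lt.2 (by decide : (1 : Fin 3) < 2))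
  have hsW : s ∈ W := by rcases hs with rfl | rfl <;> exact hf _
  have hrW : (σ ^ (r + 1)) s ∈ W := by rcases hr with h | h <;> rw [h] <;> exact hf _
  have hex : ∃ k, (σ ^ (k + 1)) s ∈ W := ⟨r, hrW⟩
  exact ⟨s, hsW, Nat.find hex, Nat.find_spec hex, fun l hl hlT => Nat.find_min hex hl
    (hT _ (hf 0) _ (hf 2) ⟨hlT, hIcc l (hl.le.trans (Nat.find_min' hex hrW))⟩)⟩

end CyclewiseOrder

section HullDisjoint

open Finset Function

variable {V ι : Type*} [LinearOrder V]

/-- No interval spanned by two points of `S` contains a point of `T`. -/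
def HullDisjoint (S T : Finset V) : Prop :=
  ∀ x ∈ S, ∀ z ∈ S, ∀ y ∈ T, y ∉ Set.Icc x z

theorem HullDisjoint.mono {S S' T T' : Finset V} (h : HullDisjoint S T) (hS : S' ⊆ S)
    (hT : T' ⊆ T) : HullDisjoint S' T' :=
  fun x hx z hz y hy => h x (hS hx) z (hS hz) y (hT hy)

theorem HullDisjoint.disjoint {S T : Finset V} (h : HullDisjoint S T) : Disjoint S T :=
  disjoint_left.2 fun x hS hT => h x hS x hS x hT ⟨le_rfl, le_rfl⟩

theorem hullDisjoint_of_forall_lt {S T : Finset V} (h : ∀ x ∈ S, ∀ y ∈ T, x < y) :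
    HullDisjoint S T :=
  fun _ _ z hz y hy hyI => (h z hz y hy).not_ge hyI.2

theorem hullDisjoint_of_forall_gt {S T : Finset V} (h : ∀ x ∈ S, ∀ y ∈ T, y < x) :
    HullDisjoint S T :=
  fun x hx _ _ y hy hyI => (h x hx y hy).not_ge hyI.1

theorem exists_subset_hullDisjoint_singleton (v : V) {r : ℕ} (hr : 0 < r) {S : Finset V}
    (hS : #S = 2 * r) : ∃ T ⊆ S, #T = r ∧ HullDisjoint T {v} := by
  have hsplit := card_filter_add_card_filter_not (s := S.erase v) (· < v)
  have herase : 2 * r - 1 ≤ #(S.erase v) := hS ▸ pred_card_le_card_erase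
  rcases le_or_gt r #{x ∈ S.erase v | x < v} with hbelow | hbelow
  · obtain ⟨T, hTS, hT⟩ := exists_subset_card_eq hbelow
    refine ⟨T, (hTS.trans (filter_subset _ _)).trans (erase_subset v S), hT,
      hullDisjoint_of_forall_lt fun x hx y hy => ?_⟩
    exact mem_singleton.1 hy ▸ (mem_filter.1 (hTS hx)).2
  · obtain ⟨T, hTS, hT⟩ := exists_subset_card_eq
      (by omega : r ≤ #{x ∈ S.erase v | ¬ x < v})
    refine ⟨T, (hTS.trans (filter_subset _ _)).trans (erase_subset v S), hT,
      hullDisjoint_of_forall_gt fun x hx y hy => ?_⟩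
    obtain ⟨hxS, hxv⟩ := mem_filter.1 (hTS hx)
    exact mem_singleton.1 hy ▸ lt_of_le_of_ne (not_lt.1 hxv) (ne_of_mem_erase hxS).symm

variable [Finite V]

theorem exists_le_card_filter_le (U : ι → Finset V) {r : ℕ} (hr : 0 < r) {s : Finset ι}
    (hs : ∃ i ∈ s, r ≤ #(U i)) :
    ∃ c, (∃ i ∈ s, r ≤ #{x ∈ U i | x ≤ c}) ∧ ∀ j ∈ s, #{x ∈ U j | x ≤ c} ≤ r := by
  let C : Set V := {c | ∃ i ∈ s, r ≤ #{x ∈ U i | x ≤ c}}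
  have hC : C.Nonempty := by
    obtain ⟨i, hi, hri⟩ := hs
    have hne : (U i).Nonempty := card_pos.1 (hr.trans_le hri)
    exact ⟨(U i).max' hne, i, hi, by rwa [filter_true_of_mem fun x hx => le_max' _ x hx]⟩
  obtain ⟨c, hc, hmin⟩ := C.toFinite.exists_minimal hC
  refine ⟨c, hc, fun j hj => not_lt.1 fun hlt => ?_⟩
  have hbelow : r ≤ #{x ∈ U j | x < c} := by
    have hsub : ({x ∈ U j | x ≤ c} : Finset V) ⊆ insert c {x ∈ U j | x < c} := fun x hx => by
      obtain ⟨hxU, hxc⟩ := mem_filter.1 hx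
      rcases hxc.eq_or_lt with rfl | hxc
      · exact mem_insert_self _ _
      · exact mem_insert_of_mem (mem_filter.2 ⟨hxU, hxc⟩)
    have := (card_le_card hsub).trans (card_insert_le _ _)
    omega
  have hne : ({x ∈ U j | x < c} : Finset V).Nonempty := card_pos.1 (hr.trans_le hbelow)
  have hmax : max' _ hne < c := (mem_filter.1 (max'_mem _ hne)).2
  refine hmax.not_ge (hmin ⟨j, hj, hbelow.trans (card_le_card fun x hx => ?_)⟩ hmax.le)
  exact mem_filter.2 ⟨(mem_filter.1 hx).1, le_max' _ x hx⟩

/-- Greedily cut off the class that first accumulates `r` points from below. -/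
theorem exists_pairwise_hullDisjoint_on (s : Finset ι) {r : ℕ} (hr : 0 < r) (U : ι → Finset V)
    (hU : ∀ i ∈ s, r * #s ≤ #(U i)) :
    ∃ W : ι → Finset V, (∀ i ∈ s, W i ⊆ U i ∧ #(W i) = r) ∧
      (s : Set ι).Pairwise (HullDisjoint on W) := by
  classical
  induction hk : #s generalizing s U with
  | zero => simp [card_eq_zero.1 hk]
  | succ k ih =>
    rw [hk] at hU
    obtain ⟨i₀, hi₀⟩ := card_pos.1 (hk ▸ Nat.succ_pos k : 0 < #s)
    obtain ⟨c, ⟨i, hi, hri⟩, hc⟩ := exists_le_card_filter_le U hr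
      ⟨i₀, hi₀, (Nat.le_mul_of_pos_right r k.succ_pos).trans (hU i₀ hi₀)⟩
    have hcard : #(s.erase i) = k := by rw [card_erase_of_mem hi, hk, Nat.add_sub_cancel]
    have habove : ∀ j ∈ s.erase i, r * k ≤ #{x ∈ U j | ¬ x ≤ c} := fun j hj => by
      have hsplit := card_filter_add_card_filter_not (s := U j) (· ≤ c)
      have hUj := hU j (mem_of_mem_erase hj)
      have hcj := hc j (mem_of_mem_erase hj)
      rw [mul_add_one] at hUj
      omega
    obtain ⟨W, hW, hsep⟩ := ih (s.erase i) (fun j => {x ∈ U j | ¬ x ≤ c}) (hcard ▸ habove) hcard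
    obtain ⟨S, hSU, hS⟩ := exists_subset_card_eq hri
    have hlt : ∀ j ∈ s.erase i, ∀ x ∈ S, ∀ y ∈ W j, x < y := fun j hj x hx y hy =>
      ((mem_filter.1 (hSU hx)).2).trans_lt (not_le.1 (mem_filter.1 ((hW j hj).1 hy)).2)
    have hne : ∀ j ∈ s.erase i, update W i S j = W j := fun j hj =>
      update_of_ne (ne_of_mem_erase hj) _ _
    refine ⟨update W i S, fun j hj => ?_, ?_⟩
    · rcases eq_or_ne j i with rfl | hji
      · rw [update_self]
        exact ⟨hSU.trans (filter_subset _ _), hS⟩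
      · have hj' := mem_erase.2 ⟨hji, hj⟩
        rw [hne j hj']
        exact ⟨(hW j hj').1.trans (filter_subset _ _), (hW j hj').2⟩
    · rw [← insert_erase hi, coe_insert,
        Set.pairwise_insert_of_notMem (mod_cast notMem_erase i s)]
      refine ⟨fun j hj l hl hjl => ?_, fun j hj => ?_⟩
      · simpa only [Function.onFun, hne j hj, hne l hl] using hsep hj hl hjl
      · simp only [Function.onFun, hne j hj, update_self]
        exact ⟨hullDisjoint_of_forall_lt (hlt j hj),
          hullDisjoint_of_forall_gt fun y hy x hx => hlt j hj x hx y hy⟩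

theorem exists_pairwise_hullDisjoint [Fintype ι] (v : V) {r : ℕ} (hr : 0 < r)
    (U : ι → Finset V) (hU : ∀ i, 2 * r * Fintype.card ι ≤ #(U i)) :
    ∃ W : ι → Finset V, (∀ i, W i ⊆ U i) ∧ (∀ i, #(W i) = r) ∧
      Pairwise (HullDisjoint on W) ∧ ∀ i, HullDisjoint (W i) {v} := by
  obtain ⟨W, hW, hsep⟩ := exists_pairwise_hullDisjoint_on univ (by omega : 0 < 2 * r) U
    (fun i _ => hU i)
  rw [coe_univ, Set.pairwise_univ] at hsep
  choose T hTW hT hTv using fun i =>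
    exists_subset_hullDisjoint_singleton v hr (hW i (mem_univ i)).2
  exact ⟨T, fun i => (hTW i).trans (hW i (mem_univ i)).1, hT,
    fun i j hij => (hsep hij).mono (hTW i) (hTW j), hTv⟩

end HullDisjoint

section CompleteMultipartite

open Finset
open scoped Nat

universe u

theorem card_mul_pow_le_sum_pow {Y : Type*} {s : Finset Y} {f : Y → ℝ} (hf : ∀ y ∈ s, 0 ≤ f y)
    {a : ℝ} (ha : 0 ≤ a) (h : #s * a ≤ ∑ y ∈ s, f y) (n : ℕ) :
    #s * a ^ n ≤ ∑ y ∈ s, f y ^ n := by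
  rcases s.eq_empty_or_nonempty with rfl | hs
  · simp
  rcases n with - | n
  · simp
  have hpos : (0 : ℝ) < #s := mod_cast hs.card_pos
  calc #s * a ^ (n + 1) = (#s * a) ^ (n + 1) / #s ^ n := by
        rw [eq_div_iff (pow_pos hpos n).ne']; ring
    _ ≤ (∑ y ∈ s, f y) ^ (n + 1) / #s ^ n := by gcongr
    _ ≤ ∑ y ∈ s, f y ^ (n + 1) := pow_sum_div_card_le_sum_pow hf n

theorem max_sub_zero_pow_div_factorial_le_choose (d T : ℕ) :
    max ((d : ℝ) - T) 0 ^ T / T ! ≤ d.choose T := by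
  refine le_trans ?_ (Nat.pow_le_choose T d)
  gcongr
  rcases le_total d T with h | h
  · rw [max_eq_right (sub_nonpos.2 (mod_cast h))]
    positivity
  · rw [← Nat.cast_sub h, max_eq_left (Nat.cast_nonneg _)]
    exact_mod_cast Nat.sub_le_sub_right d.le_succ T

open Classical in
theorem sum_card_common_eq_sum_choose {V Y : Type*} [Fintype V] [Fintype Y] (R : V → Y → Prop)
    (T : ℕ) :
    ∑ S ∈ powersetCard T univ, #{y | ∀ x ∈ S, R x y} = ∑ y, (#{x | R x y}).choose T := by
  refine (sum_card_bipartiteAbove_eq_sum_card_bipartiteBelow _).trans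
    (sum_congr rfl fun y _ => ?_)
  rw [← card_powersetCard]
  congr 1
  ext S
  simp [bipartiteBelow, mem_powersetCard, subset_iff, and_comm]

open Classical in
/-- The Kővári–Sós–Turán argument: double count the pairs of a `T`-set and a common neighbour. -/
theorem exists_card_eq_le_card_common {V Y : Type*} [Fintype V] [Fintype Y] (R : V → Y → Prop)
    {c : ℝ} (hc : 0 ≤ c) {T : ℕ} (hT : T ≤ Fintype.card V)
    (hTc : T ≤ c / 2 * Fintype.card V)
    (hR : c * Fintype.card V * Fintype.card Y ≤ ∑ y, (#{x | R x y} : ℝ)) :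
    ∃ S : Finset V, #S = T ∧ (c / 2) ^ T * Fintype.card Y ≤ #{y | ∀ x ∈ S, R x y} := by
  set n : ℝ := (Fintype.card V : ℝ)
  have hmean : Fintype.card Y * (c / 2 * n) ^ T ≤ ∑ y, max ((#{x | R x y} : ℝ) - T) 0 ^ T := by
    refine card_mul_pow_le_sum_pow (fun _ _ => le_max_right _ _) (by positivity) ?_ T
    calc (Fintype.card Y : ℝ) * (c / 2 * n) ≤ ∑ y, (#{x | R x y} : ℝ) - Fintype.card Y * T := by
          nlinarith [(Fintype.card Y).cast_nonneg (α := ℝ)]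
      _ = ∑ y, ((#{x | R x y} : ℝ) - T) := by simp
      _ ≤ _ := sum_le_sum fun _ _ => le_max_left _ _
  have hsum : ∑ _S ∈ powersetCard T (univ : Finset V), (c / 2) ^ T * (Fintype.card Y : ℝ) ≤
      ∑ S ∈ powersetCard T (univ : Finset V), (#{y | ∀ x ∈ S, R x y} : ℝ) := by
    calc _ = ((Fintype.card V).choose T : ℝ) * ((c / 2) ^ T * Fintype.card Y) := by simp
      _ ≤ n ^ T / T ! * ((c / 2) ^ T * Fintype.card Y) := by
          gcongr
          exact Nat.choose_le_pow_div T _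
      _ = Fintype.card Y * (c / 2 * n) ^ T / T ! := by ring
      _ ≤ (∑ y, max ((#{x | R x y} : ℝ) - T) 0 ^ T) / T ! := by gcongr
      _ ≤ ∑ y, ((#{x | R x y}).choose T : ℝ) := by
          rw [sum_div]
          exact sum_le_sum fun y _ => max_sub_zero_pow_div_factorial_le_choose _ T
      _ = _ := by exact_mod_cast (sum_card_common_eq_sum_choose R T).symm
  obtain ⟨S, hS, hle⟩ := exists_le_of_sum_le (powersetCard_nonempty.2 hT) hsum
  exact ⟨S, (mem_powersetCard.1 hS).2, hle⟩

open Classical in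
theorem card_filter_eq_sum_card_filter_cons {V : Type*} [Fintype V] {m : ℕ}
    (P : (Fin (m + 1) → V) → Prop) :
    #{z | P z} = ∑ y : Fin m → V, #{x | P (Fin.cons x y)} := by
  simp only [card_filter]
  rw [← Fintype.sum_prod_type_right', ← (Fin.consEquiv fun _ => V).sum_comp]
  rfl

open Classical in
theorem exists_complete_multipartite_fin (T m : ℕ) {c : ℝ} (hc : 0 < c) :
    ∃ n₀ : ℕ, ∀ (V : Type u) [Fintype V], n₀ ≤ Fintype.card V →
      ∀ P : (Fin m → V) → Prop, c * (Fintype.card V : ℝ) ^ m ≤ #{x | P x} →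
        ∃ U : Fin m → Finset V, (∀ i, #(U i) = T) ∧ ∀ x, (∀ i, x i ∈ U i) → P x := by
  induction m generalizing c with
  | zero =>
    refine ⟨0, fun V _ _ P hP => ⟨Fin.elim0, fun i => i.elim0, fun x _ => ?_⟩⟩
    have hpos : 0 < #{x | P x} := by
      rw [pow_zero, mul_one] at hP
      exact_mod_cast hc.trans_le hP
    obtain ⟨y, hy⟩ := card_pos.1 hpos
    exact Subsingleton.elim y x ▸ (mem_filter.1 hy).2
  | succ m ih =>
    obtain ⟨n₀, hn₀⟩ := ih (c := (c / 2) ^ T) (by positivity)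
    refine ⟨max n₀ (max T ⌈T / (c / 2)⌉₊), fun V _ hn P hP => ?_⟩
    simp only [max_le_iff, Nat.ceil_le] at hn
    obtain ⟨hn₀V, hTV, hTc⟩ := hn
    rw [div_le_iff₀' (by positivity)] at hTc
    obtain ⟨S, hS, hcommon⟩ := exists_card_eq_le_card_common
      (fun (x : V) (y : Fin m → V) => P (Fin.cons x y)) hc.le hTV hTc (by
        rw [card_filter_eq_sum_card_filter_cons] at hP
        push_cast at hP
        simpa [pow_succ', mul_assoc] using hP)
    obtain ⟨U, hU, hUP⟩ := hn₀ V hn₀V (fun y => ∀ x ∈ S, P (Fin.cons x y))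
      (by convert hcommon; simp)
    refine ⟨Fin.cons S U, Fin.cases hS hU, fun x hx => ?_⟩
    rw [← Fin.cons_self_tail x]
    exact hUP _ (fun i => hx i.succ) _ (hx 0)

open Classical in
theorem exists_complete_multipartite (ι : Type*) [Fintype ι] (T : ℕ) {c : ℝ} (hc : 0 < c) :
    ∃ n₀ : ℕ, ∀ (V : Type u) [Fintype V], n₀ ≤ Fintype.card V →
      ∀ P : (ι → V) → Prop, c * (Fintype.card V : ℝ) ^ Fintype.card ι ≤ #{x | P x} →
        ∃ U : ι → Finset V, (∀ i, #(U i) = T) ∧ ∀ x, (∀ i, x i ∈ U i) → P x := by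
  obtain ⟨n₀, hn₀⟩ := exists_complete_multipartite_fin.{u} T (Fintype.card ι) hc
  let e := Fintype.equivFin ι
  refine ⟨n₀, fun V _ hn P hP => ?_⟩
  have hcard : #{x | P x} = #{x : Fin (Fintype.card ι) → V | P (x ∘ e)} :=
    card_equiv (e.arrowCongr (Equiv.refl V)) fun x => by
      simp [Equiv.arrowCongr, Function.comp_assoc]
  obtain ⟨U, hU, hUP⟩ := hn₀ V hn (fun x => P (x ∘ e)) (hcard ▸ hP)
  refine ⟨U ∘ e, fun i => hU _, fun x hx => ?_⟩
  simpa [Function.comp_assoc] using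
    hUP (x ∘ e.symm) fun i => by simpa using hx (e.symm i)

end CompleteMultipartite

section RobustExpansion

open Finset

variable {V : Type*} {G : V → V → Prop} {ν τ : ℝ}

theorem inDeg_eq_ncard (G : V → V → Prop) (x : V) : inDeg G x = {y | G y x}.ncard :=
  Nat.card_coe_set_eq _

theorem outDeg_eq_ncard (G : V → V → Prop) (x : V) : outDeg G x = {y | G x y}.ncard :=
  Nat.card_coe_set_eq _

theorem outDeg_comp_perm (G : V → V → Prop) (σ : Equiv.Perm V) (x : V) :
    outDeg (fun x y => G x (σ y)) x = outDeg G x :=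
  Nat.card_congr (σ.subtypeEquiv fun _ => Iff.rfl)

variable [Fintype V]

theorem inDeg_eq_card_filter (G : V → V → Prop) [DecidableRel G] (x : V) :
    inDeg G x = #{y | G y x} := by
  rw [inDeg, Nat.card_eq_fintype_card, Fintype.card_subtype]

theorem outDeg_eq_card_filter (G : V → V → Prop) [DecidableRel G] (x : V) :
    outDeg G x = #{y | G x y} := by
  rw [outDeg, Nat.card_eq_fintype_card, Fintype.card_subtype]

theorem robustOutNbhd_eq_univ (hin : ∀ x, (τ + ν) * Fintype.card V ≤ inDeg G x)
    {S : Set V} (hS : (1 - τ) * Fintype.card V ≤ S.ncard) : RobustOutNbhd G ν S = Set.univ := by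
  refine Set.eq_univ_iff_forall.2 fun x => ?_
  have hsplit : inDeg G x ≤ {y ∈ S | G y x}.ncard + Sᶜ.ncard := by
    rw [inDeg_eq_ncard]
    refine (Set.ncard_le_ncard fun y hy => ?_).trans (Set.ncard_union_le _ _)
    exact (em (y ∈ S)).imp (fun hyS => ⟨hyS, hy⟩) id
  have hcompl : (S.ncard : ℝ) + Sᶜ.ncard = Fintype.card V := by
    rw [← Nat.card_eq_fintype_card]
    exact_mod_cast Set.ncard_add_ncard_compl S
  have hsplit' : (inDeg G x : ℝ) ≤ {y ∈ S | G y x}.ncard + Sᶜ.ncard := mod_cast hsplit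
  change ν * (Fintype.card V : ℝ) ≤ _
  linarith [hin x]

theorem RobustOutExpander.iterate_eq_univ (h : RobustOutExpander G ν τ) (hτ : 0 ≤ τ) (hν : 0 ≤ ν)
    (hin : ∀ x, (τ + ν) * Fintype.card V ≤ inDeg G x) {K : ℕ} (hK : 1 ≤ ν * K) {S : Set V}
    (hS : τ * Fintype.card V < S.ncard) : (RobustOutNbhd G ν)^[K + 1] S = Set.univ := by
  have hn : (0 : ℝ) ≤ Fintype.card V := Nat.cast_nonneg _
  have hgrow : ∀ k : ℕ, (1 - τ) * Fintype.card V ≤ ((RobustOutNbhd G ν)^[k] S).ncard ∨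
      (τ + ν * k) * Fintype.card V < ((RobustOutNbhd G ν)^[k] S).ncard := by
    intro k
    induction k with
    | zero => right; simpa using hS
    | succ k ih =>
      rw [Function.iterate_succ_apply']
      rcases le_or_gt ((1 - τ) * Fintype.card V : ℝ) ((RobustOutNbhd G ν)^[k] S).ncard
        with hlarge | hsmall
      · left
        rw [robustOutNbhd_eq_univ hin hlarge, Set.ncard_univ, Nat.card_eq_fintype_card]
        nlinarith [mul_nonneg hτ hn]
      · right
        have hk := ih.resolve_left hsmall.not_ge
        have hνk : 0 ≤ ν * k * Fintype.card V := by positivity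
        have hexp := h _ (by linarith) hsmall
        push_cast
        linarith
  rw [Function.iterate_succ_apply']
  refine robustOutNbhd_eq_univ hin ((hgrow K).elim id fun hK' => ?_)
  nlinarith [mul_le_mul_of_nonneg_right hK hn]

theorem RobustOutNbhd.exists_adj [Nonempty V] (hν : 0 < ν) {S : Set V} {y : V}
    (hy : y ∈ RobustOutNbhd G ν S) : ∃ x ∈ S, G x y := by
  have hpos : (0 : ℝ) < {x ∈ S | G x y}.ncard :=
    (mul_pos hν (mod_cast Fintype.card_pos)).trans_le hy
  exact Set.nonempty_of_ncard_ne_zero (by exact_mod_cast hpos.ne')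

/-- Hall's condition holds: small sets because of the outdegrees, medium ones by expansion, and
large ones because of the indegrees. -/
theorem RobustOutExpander.exists_perm (h : RobustOutExpander G ν τ) (hν : 0 < ν)
    (hout : ∀ x, (τ + ν) * Fintype.card V ≤ outDeg G x)
    (hin : ∀ x, (τ + ν) * Fintype.card V ≤ inDeg G x) :
    ∃ σ : Equiv.Perm V, ∀ x, G x (σ x) := by
  classical
  have hall : ∀ A : Finset V, #A ≤ #{y | ∃ x ∈ A, G x y} := by
    intro A
    rcases A.eq_empty_or_nonempty with rfl | ⟨x, hx⟩
    · simp
    have : Nonempty V := ⟨x⟩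
    have hn : 0 ≤ ν * Fintype.card V := by positivity
    have hN : RobustOutNbhd G ν A ⊆ {y | ∃ x ∈ A, G x y} := fun y =>
      RobustOutNbhd.exists_adj hν
    rw [← Set.ncard_coe_finset A, ← Set.ncard_coe_finset (filter _ _), coe_filter_univ]
    rcases le_or_gt ((A : Set V).ncard : ℝ) (τ * Fintype.card V) with hsmall | hsmall
    · have hdeg : outDeg G x ≤ {y | ∃ x ∈ A, G x y}.ncard :=
        (outDeg_eq_ncard G x).trans_le (Set.ncard_le_ncard fun y hy => ⟨x, hx, hy⟩)
      have hdeg' : (outDeg G x : ℝ) ≤ {y | ∃ x ∈ A, G x y}.ncard := mod_cast hdeg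
      exact (Nat.cast_le (α := ℝ)).1 (by linarith [hout x, hn])
    rcases le_or_gt ((1 - τ) * Fintype.card V : ℝ) (A : Set V).ncard with hlarge | hmedium
    · exact Set.ncard_le_ncard
        ((Set.subset_univ _).trans ((robustOutNbhd_eq_univ hin hlarge).symm.trans_subset hN))
    · have hle : (A : Set V).ncard ≤ (RobustOutNbhd G ν A).ncard :=
        (Nat.cast_le (α := ℝ)).1 (by linarith [h A hsmall hmedium, hn])
      exact hle.trans (Set.ncard_le_ncard hN)
  obtain ⟨f, hf, hGf⟩ := (Fintype.all_card_le_filter_rel_iff_exists_injective G).1 hall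
  exact ⟨Equiv.ofBijective f (Finite.injective_iff_bijective.1 hf), hGf⟩

theorem RobustOutExpander.comp_perm (h : RobustOutExpander G ν τ) (σ : Equiv.Perm V) :
    RobustOutExpander (fun x y => G x (σ y)) ν τ := fun S hτ hτ' =>
  (h S hτ hτ').trans_eq <| congrArg _ <|
    (Set.ncard_preimage_of_injective_subset_range σ.injective (by simp)).symm

end RobustExpansion

section BlockWalks

open Finset Equiv

universe u

variable {J : Type*} {V : Type*} {H : V → V → Prop} {k : ℕ}

/-- `w` is a walk from `a` in the digraph `H` whose last vertex has an edge to `b`. The endpoint `b`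
is left out so that such walks can be concatenated. -/
structure IsWalkTo (H : V → V → Prop) (a b : V) (w : Fin (k + 1) → V) : Prop where
  zero : w 0 = a
  adj (i : Fin k) : H (w i.castSucc) (w i.succ)
  adj_last : H (w (Fin.last k)) b

theorem IsWalkTo.snoc {a b c : V} {w : Fin (k + 1) → V} (hw : IsWalkTo H a c w) (hcb : H c b) :
    IsWalkTo H a b (Fin.snoc w c : Fin (k + 2) → V) where
  zero := by rw [← Fin.castSucc_zero, Fin.snoc_castSucc, hw.zero]
  adj i := by
    refine Fin.lastCases ?_ (fun i => ?_) i
    · rw [Fin.snoc_castSucc, Fin.succ_last, Fin.snoc_last]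
      exact hw.adj_last
    · rw [Fin.snoc_castSucc, Fin.succ_castSucc, Fin.snoc_castSucc]
      exact hw.adj i
  adj_last := by rwa [Fin.snoc_last]

open Classical in
theorem sum_card_isWalkTo_le [Fintype V] (H : V → V → Prop) (k : ℕ) (a b : V) :
    ∑ c with H c b, #{w : Fin (k + 1) → V | IsWalkTo H a c w} ≤
      #{w : Fin (k + 2) → V | IsWalkTo H a b w} := by
  rw [← card_sigma]
  refine card_le_card_of_injOn
    (fun p : (_ : V) × (Fin (k + 1) → V) => (Fin.snoc p.2 p.1 : Fin (k + 2) → V)) ?_ ?_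
  · rintro ⟨c, w⟩ hp
    simp only [coe_sigma, Set.mem_sigma_iff, mem_coe, mem_filter_univ] at hp ⊢
    exact hp.2.snoc hp.1
  · rintro ⟨c, w⟩ - ⟨c', w'⟩ - h
    obtain ⟨rfl, rfl⟩ := Fin.snoc_injective2 h
    rfl

open Classical in
theorem pow_le_card_isWalkTo [Fintype V] {ν : ℝ} (hν : 0 ≤ ν) (a : V) (k : ℕ) {b : V}
    (hb : b ∈ (RobustOutNbhd H ν)^[k] {y | H a y}) :
    (ν * Fintype.card V) ^ k ≤ #{w : Fin (k + 1) → V | IsWalkTo H a b w} := by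
  induction k generalizing b with
  | zero =>
    have hw : 0 < #{w : Fin 1 → V | IsWalkTo H a b w} :=
      card_pos.2 ⟨fun _ => a, mem_filter_univ _ |>.2 ⟨rfl, fun i => i.elim0, hb⟩⟩
    rw [pow_zero]
    exact_mod_cast hw
  | succ k ih =>
    rw [Function.iterate_succ_apply'] at hb
    set S := (RobustOutNbhd H ν)^[k] {y | H a y}
    have hS : ν * Fintype.card V ≤ (#{c | c ∈ S ∧ H c b} : ℝ) := by
      rw [← Set.ncard_coe_finset, coe_filter_univ]
      exact hb
    calc (ν * Fintype.card V) ^ (k + 1) = ν * Fintype.card V * (ν * Fintype.card V) ^ k :=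
          pow_succ' _ _
      _ ≤ #{c | c ∈ S ∧ H c b} * (ν * Fintype.card V) ^ k := by gcongr
      _ ≤ ∑ c with c ∈ S ∧ H c b, (#{w : Fin (k + 1) → V | IsWalkTo H a c w} : ℝ) := by
          rw [← nsmul_eq_mul]
          exact card_nsmul_le_sum _ _ _ fun c hc => ih ((mem_filter_univ _).1 hc).1
      _ ≤ ∑ c with H c b, (#{w : Fin (k + 1) → V | IsWalkTo H a c w} : ℝ) :=
          sum_le_sum_of_subset_of_nonneg (monotone_filter_right _ fun _ _ hc => hc.2)
            fun _ _ _ => Nat.cast_nonneg _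
      _ ≤ #{w : Fin (k + 2) → V | IsWalkTo H a b w} := mod_cast sum_card_isWalkTo_le H k a b

open Classical in
theorem RobustOutExpander.pow_le_card_isWalkTo [Fintype V] {ν τ : ℝ}
    (h : RobustOutExpander H ν τ) (hν : 0 < ν) (hτ : 0 ≤ τ)
    (hout : ∀ x, (τ + ν) * Fintype.card V ≤ outDeg H x)
    (hin : ∀ x, (τ + ν) * Fintype.card V ≤ inDeg H x) {K : ℕ} (hK : 1 ≤ ν * K) (a b : V) :
    (ν * Fintype.card V) ^ (K + 1) ≤ #{w : Fin (K + 2) → V | IsWalkTo H a b w} := by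
  have : Nonempty V := ⟨a⟩
  have hpos : 0 < ν * Fintype.card V := by positivity
  have hdeg : τ * Fintype.card V < ({y | H a y}.ncard : ℝ) := by
    rw [← outDeg_eq_ncard]
    linarith [hout a]
  refine _root_.pow_le_card_isWalkTo hν.le a _ ?_
  rw [h.iterate_eq_univ hτ hν.le hin hK hdeg]
  trivial

/-- Each `j : J` carries a block of `k + 1` consecutive positions. `blockSucc ρ k` moves one step
along a block, and from the end of block `j` to the start of block `ρ j`. -/
def blockSucc (ρ : Perm J) (k : ℕ) : Perm (J × Fin (k + 1)) :=
  (prodCongrRight fun _ => finRotate (k + 1)).trans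
    (prodCongrLeft fun i => if i = 0 then ρ else 1)

theorem blockSucc_last (ρ : Perm J) (k : ℕ) (j : J) :
    blockSucc ρ k (j, Fin.last k) = (ρ j, 0) := by
  simp [blockSucc]

theorem blockSucc_castSucc (ρ : Perm J) (j : J) (i : Fin k) :
    blockSucc ρ k (j, i.castSucc) = (j, i.succ) := by
  simp [blockSucc]

theorem blockSucc_ne {ρ : Perm J} (hρ : ∀ j, ρ j ≠ j) (p : J × Fin (k + 1)) :
    blockSucc ρ k p ≠ p := by
  obtain ⟨j, i⟩ := p
  induction i using Fin.lastCases with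
  | last =>
    rw [blockSucc_last]
    exact fun h => hρ j (congrArg Prod.fst h)
  | cast i =>
    rw [blockSucc_castSucc]
    exact fun h => i.castSucc_lt_succ.ne' (congrArg Prod.snd h)

theorem blockSucc_sameCycle {ρ : Perm J} (hρ : ∀ i j, ρ.SameCycle i j)
    (p q : J × Fin (k + 1)) : (blockSucc ρ k).SameCycle p q := by
  have hblock : ∀ j i, (blockSucc ρ k).SameCycle (j, 0) (j, i) := by
    intro j i
    induction i using Fin.induction with
    | zero => exact .refl _ _
    | succ i ih =>
      rw [← blockSucc_castSucc]
      exact Perm.sameCycle_apply_right.2 ih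
  have hle : Perm.SameCycle.setoid ρ ≤
      (Perm.SameCycle.setoid (blockSucc ρ k)).comap fun j => (j, 0) := by
    refine setoid_le_of_rel_apply fun j => ?_
    change (blockSucc ρ k).SameCycle (j, 0) (ρ j, 0)
    rw [← blockSucc_last]
    exact Perm.sameCycle_apply_right.2 (hblock j _)
  exact (hblock p.1 p.2).symm.trans <| Perm.SameCycle.trans (hle (hρ p.1 q.1)) (hblock q.1 q.2)

open Classical in
/-- Choose the starting vertices of the blocks, then connect each to the next one. -/
theorem prod_card_mul_pow_le_card_closedWalks [Fintype J] [Fintype V] {B : ℝ} (hB : 0 ≤ B)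
    (hwalk : ∀ a b, B ≤ #{w : Fin (k + 1) → V | IsWalkTo H a b w}) (ρ : Perm J)
    (A : J → Finset V) :
    (∏ j, (#(A j) : ℝ)) * B ^ Fintype.card J ≤ #{x : J × Fin (k + 1) → V |
      (∀ p, H (x p) (x (blockSucc ρ k p))) ∧ ∀ j, x (j, 0) ∈ A j} := by
  have hcard : ∑ h ∈ Fintype.piFinset A,
      ∏ j, #{w : Fin (k + 1) → V | IsWalkTo H (h j) (h (ρ j)) w} ≤
      #{x : J × Fin (k + 1) → V |
        (∀ p, H (x p) (x (blockSucc ρ k p))) ∧ ∀ j, x (j, 0) ∈ A j} := by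
    simp only [← Fintype.card_piFinset, ← card_sigma]
    refine card_le_card_of_injOn (fun q p => q.2 p.1 p.2) ?_ ?_
    · rintro ⟨h, w⟩ hq
      simp only [coe_sigma, Set.mem_sigma_iff, mem_coe, Fintype.mem_piFinset,
        mem_filter_univ] at hq ⊢
      obtain ⟨hA, hw⟩ := hq
      refine ⟨?_, fun j => (hw j).zero ▸ hA j⟩
      rintro ⟨j, i⟩
      induction i using Fin.lastCases with
      | last => simpa only [blockSucc_last, (hw (ρ j)).zero] using (hw j).adj_last
      | cast i => simpa only [blockSucc_castSucc] using (hw j).adj i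
    · rintro ⟨h, w⟩ hq ⟨h', w'⟩ hq' heq
      simp only [coe_sigma, Set.mem_sigma_iff, mem_coe, Fintype.mem_piFinset,
        mem_filter_univ] at hq hq'
      obtain rfl : w = w' := funext fun j => funext fun i => congrFun heq (j, i)
      obtain rfl : h = h' := funext fun j => (hq.2 j).zero.symm.trans (hq'.2 j).zero
      rfl
  calc (∏ j, (#(A j) : ℝ)) * B ^ Fintype.card J
      = ∑ _h ∈ Fintype.piFinset A, ∏ _j : J, B := by simp [Fintype.card_piFinset]
    _ ≤ ∑ h ∈ Fintype.piFinset A,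
          ∏ j, (#{w : Fin (k + 1) → V | IsWalkTo H (h j) (h (ρ j)) w} : ℝ) := by
        gcongr
        exact hwalk _ _
    _ ≤ _ := mod_cast hcard

open Classical in
theorem exists_blowup_closedWalk [Finite J] {ρ : Perm J} (hρ : ∀ j, ρ j ≠ j) (k : ℕ) {T : ℕ}
    (hT : 0 < T) {α β : ℝ} (hα : 0 < α) (hβ : 0 < β) :
    ∃ n₀ : ℕ, ∀ (V : Type u) [Fintype V] (H : V → V → Prop), n₀ ≤ Fintype.card V →
      (∀ a b, (β * Fintype.card V) ^ k ≤ #{w : Fin (k + 1) → V | IsWalkTo H a b w}) →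
      ∀ A : J → Finset V, (∀ j, α * Fintype.card V ≤ #(A j)) →
        ∃ U : J × Fin (k + 1) → Finset V, (∀ p, #(U p) = T) ∧
          (∀ p, ∀ a ∈ U p, ∀ b ∈ U (blockSucc ρ k p), H a b) ∧ ∀ j, U (j, 0) ⊆ A j := by
  have := Fintype.ofFinite J
  obtain ⟨n₀, hn₀⟩ := exists_complete_multipartite.{u} (J × Fin (k + 1)) T
    (c := α ^ Fintype.card J * (β ^ k) ^ Fintype.card J) (by positivity)
  refine ⟨n₀, fun V _ H hn hwalk A hA => ?_⟩
  have hcount : α ^ Fintype.card J * (β ^ k) ^ Fintype.card J *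
      (Fintype.card V : ℝ) ^ Fintype.card (J × Fin (k + 1)) ≤ #{x : J × Fin (k + 1) → V |
        (∀ p, H (x p) (x (blockSucc ρ k p))) ∧ ∀ j, x (j, 0) ∈ A j} := by
    calc _ = (∏ _j : J, α * Fintype.card V) * ((β * Fintype.card V) ^ k) ^ Fintype.card J := by
          simp only [prod_const, card_univ, Fintype.card_prod, Fintype.card_fin]
          ring
      _ ≤ (∏ j, (#(A j) : ℝ)) * ((β * Fintype.card V) ^ k) ^ Fintype.card J := by
          gcongr
          exact hA _
      _ ≤ _ := prod_card_mul_pow_le_card_closedWalks (by positivity) hwalk ρ A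
  obtain ⟨U, hU, hclosed⟩ := hn₀ V hn _ (by convert hcount)
  have hne : ∀ p, (U p).Nonempty := fun p => card_pos.1 (by rwa [hU])
  choose x hx using hne
  have hupdate : ∀ y : J × Fin (k + 1) → V, (∀ q, y q ∈ U q) → ∀ p, ∀ a ∈ U p, ∀ q,
      Function.update y p a q ∈ U q := fun y hy p a ha =>
    Function.forall_update_iff y (fun q b => b ∈ U q) |>.2 ⟨ha, fun q _ => hy q⟩
  refine ⟨U, hU, fun p a ha b hb => ?_, fun j a ha => ?_⟩
  · simpa [(blockSucc_ne hρ p).symm] using (hclosed _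
      (hupdate _ (hupdate x hx p a ha) (blockSucc ρ k p) b hb)).1 p
  · simpa using (hclosed _ (hupdate x hx (j, 0) a ha)).2 j

end BlockWalks

section Merging

open Finset Function
open Equiv (Perm)
open Equiv.Perm (SameCycle)

universe u

variable {V : Type*} {σ : Perm V}

theorem exists_pairwise_disjoint_return [Finite V] (σ : Perm V) {ι : Type*} [Fintype ι] (v : V)
    {r : ℕ} {s : ι → ℕ} (hs : ∀ i, 3 ≤ s i) (hsr : ∀ i, s i ≤ r) (hr : 0 < r) {U : ι → Finset V}
    (hU : ∀ i, 2 * r * Fintype.card ι ≤ #(U i)) :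
    ∃ W : ι → Finset V, (∀ i, W i ⊆ U i) ∧ (∀ i, #(W i) = s i) ∧ Pairwise (Disjoint on W) ∧
      (∀ i, v ∉ W i) ∧ ∀ i, ∃ x ∈ W i, ∃ k, (σ ^ (k + 1)) x ∈ W i ∧
        ∀ l < k, (σ ^ (l + 1)) x ∉ insert v (⋃ i, (W i : Set V)) := by
  obtain ⟨_, hσ⟩ := exists_linearOrder_isCyclewise σ
  obtain ⟨W', hWU, hW', hdisj, hv⟩ := exists_pairwise_hullDisjoint v hr U hU
  choose W hW hWs using fun i => exists_subset_card_eq ((hsr i).trans_eq (hW' i).symm)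
  replace hdisj : Pairwise (HullDisjoint on W) := fun i j hij => (hdisj hij).mono (hW i) (hW j)
  replace hv i : HullDisjoint (W i) {v} := (hv i).mono (hW i) subset_rfl
  refine ⟨W, fun i => (hW i).trans (hWU i), hWs, fun i j hij => (hdisj hij).disjoint,
    fun i => disjoint_singleton_right.1 (hv i).disjoint, fun i => ?_⟩
  refine hσ.exists_return ((hs i).trans_eq (hWs i).symm) fun x hx z hz => ?_
  rintro y ⟨rfl | hy, hyI⟩
  · exact (hv i x hx z hz y (mem_singleton_self y) hyI).elim
  · obtain ⟨j, hj⟩ := Set.mem_iUnion.1 hy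
    rcases eq_or_ne i j with rfl | hij
    · exact hj
    · exact (hdisj hij x hx z hz y hj hyI).elim

/-- The sizes of the sets to be rerouted at the positions of a circle of three blocks. The vertex
`v` enters after the end of block `0` and leaves after the start of block `2`, so the sets in
between are larger by one. -/
def blockSize (k : ℕ) (p : Fin 3 × Fin (k + 1)) : ℕ :=
  if p.1 = 1 ∨ p = (2, 0) then 4 else 3

theorem blockSize_add_ite (k : ℕ) (p : Fin 3 × Fin (k + 1)) :
    (blockSize k p + if p = (0, Fin.last k) then 1 else 0) =
      blockSize k (blockSucc (finRotate 3) k p) + if p = (2, 0) then 1 else 0 := by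
  obtain ⟨j, i⟩ := p
  induction i using Fin.lastCases with
  | last =>
    rw [blockSucc_last]
    fin_cases j <;> simp [blockSize, add_ite]
  | cast i =>
    rw [blockSucc_castSucc]
    fin_cases j <;> simp [blockSize, i.castSucc_lt_last.ne, add_ite]

theorem exists_perm_of_blowup [Finite V] (σ : Perm V) {H : V → V → Prop} (hrefl : ∀ x, H x x)
    {k : ℕ} {v : V} {U : Fin 3 × Fin (k + 1) → Finset V}
    (hU : ∀ p, 2 * 4 * Fintype.card (Fin 3 × Fin (k + 1)) ≤ #(U p))
    (hH : ∀ p, ∀ x ∈ U p, ∀ y ∈ U (blockSucc (finRotate 3) k p), H x y)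
    (hout : ∀ y ∈ U (1, 0), H v y) (hin : ∀ x ∈ U (2, 0), H x v) :
    ∃ π : Perm V, (∀ x, H x (π x)) ∧ SameCycle.setoid σ ≤ SameCycle.setoid (σ * π) ∧
      ∃ x ∈ U (0, 0), (σ * π).SameCycle v x := by
  obtain ⟨W, hWU, hWs, hdisj, hv, hret⟩ := exists_pairwise_disjoint_return σ v
    (s := blockSize k) (fun p => by unfold blockSize; split_ifs <;> omega)
    (fun p => by unfold blockSize; split_ifs <;> omega) (by omega : 0 < 4) hU
  obtain ⟨π, hπ, hle, hmerge⟩ := exists_transports_adjoinAt (W := fun p => (W p : Set V)) σ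
    (blockSucc_sameCycle (k := k) (by decide : ∀ i j, (finRotate 3).SameCycle i j))
    (fun p q hpq => disjoint_coe.2 (hdisj hpq)) hv
    (fun p => by simpa only [Set.ncard_coe_finset, hWs] using blockSize_add_ite k p) hret
  refine ⟨π, fun x => ?_, hle, ?_⟩
  · by_cases hx : x ∈ ⋃ p, adjoinAt (fun p => (W p : Set V)) v (0, Fin.last k) p
    · obtain ⟨p, hxp⟩ := Set.mem_iUnion.1 hx
      rcases hxp, hπ.apply_mem hxp with ⟨hxW | ⟨rfl, rfl⟩, hyW | ⟨hy, hp⟩⟩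
      · exact hH p x (hWU _ hxW) _ (hWU _ hyW)
      · exact hy ▸ hin x (hWU _ (hp ▸ hxW))
      · have hy := hWU _ hyW
        rw [blockSucc_last] at hy
        exact hout _ hy
      · rw [hy]
        exact hrefl x
    · rw [hπ.apply_eq_self x hx]
      exact hrefl x
  · obtain ⟨x, hx, -⟩ := hret (0, 0)
    exact ⟨x, hWU _ hx, hmerge x (Set.mem_iUnion.2 ⟨_, hx⟩)⟩

theorem exists_card_le_two_mul_card_not_sameCycle [Fintype V] [DecidableEq V]
    (hσ : ¬ ∀ x y, σ.SameCycle x y) :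
    ∃ v, Fintype.card V ≤ 2 * #{z | ¬ σ.SameCycle v z} := by
  push Not at hσ
  obtain ⟨x, y, hxy⟩ := hσ
  have hcover : Fintype.card V ≤ #{z | ¬ σ.SameCycle x z} + #{z | ¬ σ.SameCycle y z} := by
    refine le_trans (card_le_card fun z _ => ?_) (card_union_le _ _)
    simp only [mem_union, mem_filter_univ]
    by_contra! hz
    exact hxy (hz.1.trans hz.2.symm)
  by_contra! hlt
  linarith [hlt x, hlt y]

theorem RobustOutExpander.exists_perm_setoid_lt {ν τ : ℝ} (hν : 0 < ν) (hτ : 0 ≤ τ) :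
    ∃ n₀ : ℕ, ∀ (V : Type u) [Fintype V] (H : V → V → Prop), n₀ ≤ Fintype.card V →
      RobustOutExpander H ν τ → (∀ x, (τ + ν) * Fintype.card V ≤ outDeg H x) →
      (∀ x, (τ + ν) * Fintype.card V ≤ inDeg H x) → (∀ x, H x x) →
      ∀ σ : Perm V, (¬ ∀ x y, σ.SameCycle x y) →
        ∃ π : Perm V, (∀ x, H x (π x)) ∧ SameCycle.setoid σ < SameCycle.setoid (σ * π) := by
  classical
  obtain ⟨K, hK⟩ : ∃ K : ℕ, 1 ≤ ν * K := by
    obtain ⟨K, hK⟩ := exists_nat_ge (1 / ν)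
    exact ⟨K, (div_le_iff₀' hν).1 hK⟩
  obtain ⟨n₀, hn₀⟩ := exists_blowup_closedWalk.{u} (ρ := finRotate 3) (by decide) (K + 1)
    (T := 2 * 4 * Fintype.card (Fin 3 × Fin (K + 2))) (by simp)
    (α := min (1 / 2) (τ + ν)) (by positivity) hν
  refine ⟨n₀, fun V _ H hn hexp hout hin hrefl σ hσ => ?_⟩
  obtain ⟨v, hv⟩ := exists_card_le_two_mul_card_not_sameCycle hσ
  let A : Fin 3 → Finset V :=
    ![univ.filter (¬ σ.SameCycle v ·), univ.filter (H v ·), univ.filter (H · v)]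
  have hA (j : Fin 3) : min (1 / 2) (τ + ν) * Fintype.card V ≤ #(A j) := by
    have hmin₁ : min (1 / 2) (τ + ν) * Fintype.card V ≤ 1 / 2 * Fintype.card V := by
      gcongr; exact min_le_left _ _
    have hmin₂ : min (1 / 2) (τ + ν) * Fintype.card V ≤ (τ + ν) * Fintype.card V := by
      gcongr; exact min_le_right _ _
    fin_cases j
    · have hv' : (Fintype.card V : ℝ) ≤ 2 * #(A 0) := mod_cast hv
      exact hmin₁.trans (show _ ≤ (#(A 0) : ℝ) by linarith)
    · exact hmin₂.trans ((hout v).trans_eq (congrArg _ (outDeg_eq_card_filter H v)))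
    · exact hmin₂.trans ((hin v).trans_eq (congrArg _ (inDeg_eq_card_filter H v)))
  obtain ⟨U, hU, hH, hUA⟩ := hn₀ V H hn (fun a b => by
    convert hexp.pow_le_card_isWalkTo hν hτ hout hin hK a b) A hA
  obtain ⟨π, hπ, hle, x, hx, hvx⟩ := exists_perm_of_blowup σ hrefl (fun p => (hU p).ge) hH
    (fun y hy => by simpa [A] using hUA 1 hy) (fun y hy => by simpa [A] using hUA 2 hy)
  have hvx' : ¬ σ.SameCycle v x := by simpa [A] using hUA 0 hx
  exact ⟨π, hπ, hle.lt_of_not_ge fun hge => hvx' (hge hvx)⟩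

end Merging

section HamiltonCycles

open Equiv (Perm)
open Equiv.Perm (SameCycle)

universe u

theorem exists_isHamCycle_of_sameCycle {V : Type*} [Fintype V] [Nonempty V] {G : V → V → Prop}
    {σ : Perm V} (hG : ∀ x, G x (σ x)) (hσ : ∀ x y, σ.SameCycle x y) :
    ∃ f : ZMod (Fintype.card V) → V, IsHamCycle G f := by
  obtain ⟨x₀⟩ := ‹Nonempty V›
  have hon : σ.IsCycleOn (Finset.univ : Finset V) := ⟨by simp, fun x _ y _ => hσ x y⟩
  have hpow {m n : ℕ} :
      (σ ^ m) x₀ = (σ ^ n) x₀ ↔ (m : ZMod (Fintype.card V)) = (n : ZMod (Fintype.card V)) :=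
    (hon.pow_apply_eq_pow_apply (Finset.mem_univ x₀)).trans (ZMod.natCast_eq_natCast_iff _ _ _).symm
  refine ⟨fun i => (σ ^ i.val) x₀, ⟨fun i j hij => ?_, fun y => ?_⟩, fun i => ?_⟩
  · simpa using hpow.1 hij
  · obtain ⟨k, -, rfl⟩ := hon.exists_pow_eq (Finset.mem_univ x₀) (Finset.mem_univ y)
    exact ⟨k, hpow.2 (by simp)⟩
  · have hsucc : (σ ^ (i + 1).val) x₀ = (σ ^ (i.val + 1)) x₀ := hpow.2 (by simp)
    simpa only [hsucc, pow_succ', Perm.mul_apply] using hG ((σ ^ i.val) x₀)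

theorem robust_outexpander_hamilton_general {η ν τ : ℝ} (hν : 0 < ν) (hτ : 0 ≤ τ)
    (hη : τ + ν ≤ η) :
    ∃ n₀ : ℕ, ∀ (V : Type u) [Fintype V] (G : V → V → Prop), n₀ ≤ Fintype.card V →
      (∀ x, η * Fintype.card V ≤ outDeg G x ∧ η * Fintype.card V ≤ inDeg G x) →
      RobustOutExpander G ν τ → ∃ f : ZMod (Fintype.card V) → V, IsHamCycle G f := by
  obtain ⟨n₀, hn₀⟩ := RobustOutExpander.exists_perm_setoid_lt.{u} hν hτ
  refine ⟨n₀ + 1, fun V _ G hn hdeg hexp => ?_⟩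
  have : Nonempty V := Fintype.card_pos_iff.1 (by omega)
  have hle : (τ + ν) * Fintype.card V ≤ η * Fintype.card V := by gcongr
  have hout x := hle.trans (hdeg x).1
  have hin x := hle.trans (hdeg x).2
  obtain ⟨σ, hσ, hmax⟩ := (Set.toFinite {σ : Perm V | ∀ x, G x (σ x)}).exists_maximalFor
    SameCycle.setoid _ (hexp.exists_perm hν hout hin)
  refine exists_isHamCycle_of_sameCycle hσ ?_
  by_contra hne
  obtain ⟨π, hπ, hlt⟩ := hn₀ V (fun x y => G x (σ y)) (by omega) (hexp.comp_perm σ)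
    (fun x => (hout x).trans_eq (congrArg _ (outDeg_comp_perm G σ x).symm))
    (fun x => hin (σ x)) hσ σ hne
  exact hlt.not_ge (hmax (j := σ * π) hπ hlt.le)

end HamiltonCycles

/-- Kühn–Osthus–Treglown: for every η ∈ (0,1) there is τ ∈ (0,1) such that for every ν with
0 < ν ≤ τ there is n₀ such that every digraph on n ≥ n₀ vertices with minimum semidegree at
least ηn which is a robust (ν, τ)-outexpander contains a Hamilton cycle. -/
theorem robust_outexpander_hamilton (η : ℝ) (hη0 : 0 < η) (hη1 : η < 1) :
    ∃ τ : ℝ, 0 < τ ∧ τ < 1 ∧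
      ∀ ν : ℝ, 0 < ν → ν ≤ τ →
        ∃ n₀ : ℕ, ∀ (V : Type) [Fintype V] (G : V → V → Prop),
          Irreflexive G →
          n₀ ≤ Fintype.card V →
          (∀ x : V, η * (Fintype.card V : ℝ) ≤ (outDeg G x : ℝ) ∧
            η * (Fintype.card V : ℝ) ≤ (inDeg G x : ℝ)) →
          RobustOutExpander G ν τ →
          ∃ f : ZMod (Fintype.card V) → V, IsHamCycle G f := by
  refine ⟨η / 2, by linarith, by linarith, fun ν hν hντ => ?_⟩
  exact (robust_outexpander_hamilton_general hν (by linarith) (by linarith)).imp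
    fun n₀ h V _ G _ => h V G
end

section
/- For every integer ℓ ≥ 4 and every integer n ≥ 10^{10}·ℓ, every oriented graph G on n vertices with minimum semidegree δ⁰(G) ≥ ⌊n/3⌋ + 1 contains a directed cycle of length exactly ℓ. -/
/-- An oriented graph: no loops and no 2-cycles. -/
def IsOriented {V : Type*} (G : V → V → Prop) : Prop :=
  ∀ x y : V, G x y → ¬ G y x

/-! Let `n = |V|` and let `d > n / 3` bound the minimum semidegree from below. The key fact is that
there is a walk of length two from `X` to `Y` whenever both sets have at least `d - 1` vertices and
span an edge, unless `X = Y` has exactly `d - 1` vertices: if there is none, then `N⁺(X)` and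
`N⁻(Y)` are disjoint, and following a vertex of `N⁺(X) ∩ X` with small outdegree inside `X \ Y`
shows that `N⁺(X)` has many vertices outside `X ∪ Y`. The same holds for `N⁻(Y)`, and together with
`X ∪ Y` these are more than `n` vertices.

With `X = N⁺(x)` and `Y = N⁻(x)` this gives a cycle of length four. With `X = N⁺(x) \ {y}` and
`Y = N⁻(y) \ {x}` it gives a path of length four from `x` to `y` for all but at most `3n` pairs
`x ≠ y`.

For `ℓ ≥ 5`, start with `N⁻(x)` and repeatedly pass to the set of vertices with at least `ℓ`
outneighbours in the current set. As `ℓ ≤ n / 36`, double counting shows that these sets never have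
fewer than `n / 6` vertices, and each vertex `y ≠ x` of the `(ℓ - 5)`-th iterate starts a path of
length `ℓ - 4` to `x` whose inner vertices avoid any three given vertices. Hence there are more than
`3n` such pairs `(x, y)`, and for one of them a path of length four from `x` to `y` closes this path
to a cycle. -/

section ShortCycles

open Finset

variable {V : Type*} {G : V → V → Prop} {d K : ℕ}

theorem IsOriented.flip (hor : IsOriented G) : IsOriented (flip G) :=
  fun x y hxy hyx ↦ hor x y hyx hxy

theorem IsOriented.ne (hor : IsOriented G) {x y : V} (h : G x y) : x ≠ y := by
  rintro rfl
  exact hor x x h h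

theorem IsOriented.ne_of_adj_adj (hor : IsOriented G) {x y z : V} (hxy : G x y) (hyz : G y z) :
    x ≠ z := by
  rintro rfl
  exact hor x y hxy hyz

theorem IsOriented.card_filter_out_add_card_filter_in_lt [DecidableRel G] (hor : IsOriented G)
    {T : Finset V} {v : V} (hv : v ∈ T) : #{w ∈ T | G v w} + #{w ∈ T | G w v} < #T := by
  classical
  have hloop : ¬ G v v := fun h ↦ hor v v h h
  rw [← card_union_of_disjoint (disjoint_filter.2 fun w _ ↦ hor v w), ← filter_or]
  exact card_lt_card (filter_ssubset.2 ⟨v, hv, by simpa using hloop⟩)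

theorem IsOriented.exists_two_mul_card_filter_out_lt [DecidableRel G] (hor : IsOriented G)
    {T : Finset V} (hT : T.Nonempty) : ∃ v ∈ T, 2 * #{w ∈ T | G v w} < #T := by
  apply exists_lt_of_sum_lt
  calc ∑ v ∈ T, 2 * #{w ∈ T | G v w}
      = ∑ v ∈ T, (#{w ∈ T | G v w} + #{w ∈ T | G w v}) := by
        have hswap : ∑ v ∈ T, #{w ∈ T | G v w} = ∑ v ∈ T, #{w ∈ T | G w v} :=
          sum_card_bipartiteAbove_eq_sum_card_bipartiteBelow G
        rw [← mul_sum, sum_add_distrib, ← hswap, two_mul]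
    _ < ∑ _v ∈ T, #T :=
        sum_lt_sum_of_nonempty hT fun v hv ↦ hor.card_filter_out_add_card_filter_in_lt hv

theorem card_add_card_sdiff_add_card_sdiff_le {α : Type*} [Fintype α] [DecidableEq α]
    {S R : Finset α} (hSR : Disjoint S R) (U : Finset α) :
    #U + #(S \ U) + #(R \ U) ≤ Fintype.card α := by
  rw [add_assoc, ← card_union_of_disjoint (hSR.mono sdiff_subset sdiff_subset),
    ← union_sdiff_distrib, add_comm, card_sdiff_add_card]
  exact card_le_univ _

theorem sum_card_filter_le_card_of_leftUnique {α β : Type*} [Fintype α] [Fintype β]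
    {P : α → β → Prop} [DecidableRel P] (hP : Relator.LeftUnique P) (A : α → Finset β) :
    ∑ x, #{y ∈ A x | P x y} ≤ Fintype.card β := by
  rw [← card_sigma]
  refine card_le_card_of_injOn Sigma.snd (fun _ _ ↦ mem_univ _) ?_
  rintro ⟨x, y⟩ hx ⟨z, _⟩ hz rfl
  simp only [coe_sigma, Set.mem_sigma_iff, mem_coe, mem_filter] at hx hz
  rw [hP hx.2.2 hz.2.2]

theorem exists_mem_not_of_rightUnique_of_leftUnique {α : Type*} [Finite α] [Nonempty α]
    {P Q R : α → α → Prop}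
    (hP : Relator.RightUnique P) (hQ : Relator.LeftUnique Q) (hR : Relator.RightUnique R)
    (A : α → Finset α) (hA : ∀ x, 4 ≤ #(A x)) :
    ∃ x, ∃ y ∈ A x, ¬ P x y ∧ ¬ Q x y ∧ ¬ R x y := by
  classical
  have := Fintype.ofFinite α
  by_contra! h
  have hcover : ∀ x, #(A x) ≤ #{y ∈ A x | P x y} + #{y ∈ A x | Q x y} + #{y ∈ A x | R x y} := by
    intro x
    refine (card_le_card fun y hy ↦ ?_).trans
      ((card_union_le _ _).trans (Nat.add_le_add_right (card_union_le _ _) _))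
    have := h x y hy
    simp only [mem_union, mem_filter]
    tauto
  have hle_one {S : α → α → Prop} (hS : Relator.RightUnique S) (x : α) :
      #{y ∈ A x | S x y} ≤ 1 :=
    card_le_one.2 fun y hy z hz ↦ hS (mem_filter.1 hy).2 (mem_filter.1 hz).2
  have htwo : ∑ _x : α, 2 ≤ ∑ x, #{y ∈ A x | Q x y} := sum_le_sum fun x _ ↦ by
    linarith [hA x, hcover x, hle_one hP x, hle_one hR x]
  have hsum := htwo.trans (sum_card_filter_le_card_of_leftUnique hQ A)
  have hpos : 0 < Fintype.card α := Fintype.card_pos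
  simp only [sum_const, card_univ, smul_eq_mul] at hsum
  omega

/-- A directed path of `G`, given by the list of its vertices in order. -/
structure IsDirectedPath (G : V → V → Prop) (l : List V) : Prop where
  isChain : l.IsChain G
  nodup : l.Nodup

/-- `G` contains a directed cycle of length `ℓ`, i.e. an injective homomorphic image of the directed
cycle on `ZMod ℓ`. -/
def HasDirectedCycle (G : V → V → Prop) (ℓ : ℕ) : Prop :=
  ∃ g : ZMod ℓ → V, Function.Injective g ∧ ∀ i, G (g i) (g (i + 1))

theorem hasDirectedCycle_of_isChain {a : V} {l : List V}
    (hchain : (a :: (l ++ [a])).IsChain G) (hnodup : (a :: l).Nodup) :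
    HasDirectedCycle G (l.length + 1) := by
  refine ⟨fun i ↦ (a :: l)[i.val]'i.val_lt, fun i j hij ↦ ?_, fun i ↦ ?_⟩
  · exact ZMod.val_injective _ (hnodup.getElem_inj_iff.1 hij)
  · have hval : (i + 1).val = (i.val + 1) % (l.length + 1) := by
      rw [ZMod.val_add, ZMod.val_one_eq_one_mod, Nat.add_mod_mod]
    have hadj := List.isChain_iff_getElem.1 hchain i.val (by simpa using i.val_lt)
    simp only [← List.cons_append] at hadj
    rw [List.getElem_append_left i.val_lt] at hadj
    rcases Nat.lt_succ_iff_lt_or_eq.1 i.val_lt with hi | hi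
    · rw [List.getElem_append_left (by simpa using hi)] at hadj
      simpa only [hval, Nat.mod_eq_of_lt (Nat.succ_lt_succ hi)] using hadj
    · simpa [hval, hi] using hadj

theorem IsDirectedPath.hasDirectedCycle {x y : V} {p q : List V}
    (hp : IsDirectedPath G (x :: (p ++ [y]))) (hq : IsDirectedPath G (y :: (q ++ [x])))
    (hpq : p.Disjoint q) : HasDirectedCycle G (p.length + q.length + 2) := by
  have hchain : (x :: (p ++ y :: q ++ [x])).IsChain G := by
    simpa using List.isChain_cons_split.2 ⟨hp.isChain, by simpa using hq.isChain⟩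
  have hnodup : (x :: (p ++ y :: q)).Nodup := by
    obtain ⟨hxp, -, hpy⟩ := (List.nodup_append (l₁ := x :: p)).1 hp.nodup
    obtain ⟨hyq, -, hqx⟩ := (List.nodup_append (l₁ := y :: q)).1 hq.nodup
    refine List.nodup_append.2 ⟨hxp, hyq, ?_⟩
    simp only [List.forall_mem_cons, List.mem_singleton, forall_eq] at hpy hqx ⊢
    exact ⟨⟨hpy.1, fun v hv ↦ (hqx.2 v hv).symm⟩, fun v hv ↦ ⟨hpy.2 v hv, fun w hw hvw ↦
      hpq hv (hvw ▸ hw)⟩⟩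
  simpa [add_assoc] using hasDirectedCycle_of_isChain hchain hnodup

/-- The set `X` contains both ends of some edge of `G`. -/
def SpansEdge (G : V → V → Prop) (X : Finset V) : Prop :=
  ∃ u ∈ X, ∃ v ∈ X, G u v

theorem spansEdge_flip {X : Finset V} : SpansEdge (flip G) X ↔ SpansEdge G X :=
  ⟨fun ⟨u, hu, v, hv, h⟩ ↦ ⟨v, hv, u, hu, h⟩, fun ⟨u, hu, v, hv, h⟩ ↦ ⟨v, hv, u, hu, h⟩⟩

/-- The minimum semidegree of `G` is at least `d`. -/
def HasMinSemidegree (G : V → V → Prop) (d : ℕ) : Prop :=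
  ∀ x, d ≤ outDeg G x ∧ d ≤ inDeg G x

theorem HasMinSemidegree.flip (hδ : HasMinSemidegree G d) : HasMinSemidegree (flip G) d :=
  fun x ↦ (hδ x).symm

variable [Fintype V]

open Classical in
/-- The outneighbourhood `N⁺(x)`. -/
noncomputable def outNbrs (G : V → V → Prop) (x : V) : Finset V := {y | G x y}

/-- The inneighbourhood `N⁻(x)`, as the outneighbourhood in the reversed digraph. -/
noncomputable def inNbrs (G : V → V → Prop) (x : V) : Finset V := outNbrs (flip G) x

@[simp]
theorem mem_outNbrs {x y : V} : y ∈ outNbrs G x ↔ G x y := by simp [outNbrs]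

@[simp]
theorem mem_inNbrs {x y : V} : y ∈ inNbrs G x ↔ G y x := mem_outNbrs

theorem outDeg_eq_card_outNbrs (x : V) : outDeg G x = #(outNbrs G x) := by
  classical rw [outDeg, outNbrs, Nat.card_eq_fintype_card, Fintype.card_subtype]

theorem HasMinSemidegree.le_card_outNbrs (hδ : HasMinSemidegree G d) (x : V) :
    d ≤ #(outNbrs G x) :=
  outDeg_eq_card_outNbrs (G := G) x ▸ (hδ x).1

theorem HasMinSemidegree.le_card_inNbrs (hδ : HasMinSemidegree G d) (x : V) :
    d ≤ #(inNbrs G x) :=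
  hδ.flip.le_card_outNbrs x

theorem IsOriented.disjoint_outNbrs_inNbrs (hor : IsOriented G) (x : V) :
    Disjoint (outNbrs G x) (inNbrs G x) :=
  disjoint_left.2 fun y hy hy' ↦ hor x y (mem_outNbrs.1 hy) (mem_inNbrs.1 hy')

-- For `X ⊆ Y` the last subtraction truncates to `0`, and the claim is that `N⁺(X)` has at least `d`
-- vertices outside `Y`.
theorem IsOriented.two_mul_le_card_biUnion_outNbrs_sdiff [DecidableEq V] (hor : IsOriented G)
    (hout : ∀ x, d ≤ #(outNbrs G x)) {X Y : Finset V}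
    (hXY : ∀ a ∈ X, ∀ b, ∀ c ∈ Y, G a b → ¬ G b c) (hX : SpansEdge G X) :
    2 * d ≤ 2 * #(X.biUnion (outNbrs G) \ (X ∪ Y)) + (#(X \ Y) - 1) := by
  classical
  set S := X.biUnion (outNbrs G)
  set T := (S ∩ X) \ Y
  have hmemS {a b : V} (ha : a ∈ X) (hab : G a b) : b ∈ S :=
    mem_biUnion.2 ⟨a, ha, mem_outNbrs.2 hab⟩
  obtain ⟨v, hv, hvT⟩ : ∃ v ∈ S ∩ X, 2 * #{w ∈ T | G v w} ≤ #T - 1 := by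
    rcases T.eq_empty_or_nonempty with hT | hT
    · obtain ⟨u, hu, v, hv, huv⟩ := hX
      exact ⟨v, mem_inter.2 ⟨hmemS hu huv, hv⟩, by simp [hT]⟩
    · obtain ⟨v, hv, hlt⟩ := hor.exists_two_mul_card_filter_out_lt hT
      exact ⟨v, (mem_sdiff.1 hv).1, Nat.le_sub_one_of_lt hlt⟩
  obtain ⟨hvS, hvX⟩ := mem_inter.1 hv
  obtain ⟨a, ha, hav⟩ := mem_biUnion.1 hvS
  have hsplit : outNbrs G v ⊆ {w ∈ T | G v w} ∪ S \ (X ∪ Y) := by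
    intro w hw
    rw [mem_outNbrs] at hw
    have hwS : w ∈ S := hmemS hvX hw
    have hwY : w ∉ Y := fun hwY ↦ hXY a ha v w hwY (mem_outNbrs.1 hav) hw
    simp only [T, mem_union, mem_filter, mem_sdiff, mem_inter]
    tauto
  have hdeg : d ≤ #{w ∈ T | G v w} + #(S \ (X ∪ Y)) :=
    (hout v).trans ((card_le_card hsplit).trans (card_union_le _ _))
  have hTX : #T ≤ #(X \ Y) := card_le_card (sdiff_subset_sdiff inter_subset_right subset_rfl)
  omega

theorem IsOriented.exists_adj_adj_of_spansEdge (hor : IsOriented G) (hδ : HasMinSemidegree G d)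
    (hd : Fintype.card V < 3 * d) {X Y : Finset V} (hXcard : d ≤ #X + 1) (hYcard : d ≤ #Y + 1)
    (hX : SpansEdge G X) (hY : SpansEdge G Y) (hXY : X = Y → d ≤ #X) :
    ∃ a ∈ X, ∃ b, ∃ c ∈ Y, G a b ∧ G b c := by
  classical
  by_contra! h
  set S := X.biUnion (outNbrs G)
  set R := Y.biUnion (inNbrs G)
  have hSR : Disjoint S R := by
    simp only [S, R, disjoint_left, mem_biUnion, mem_outNbrs, mem_inNbrs]
    rintro b ⟨a, ha, hab⟩ ⟨c, hc, hbc⟩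
    exact h a ha b c hc hab hbc
  have hS : 2 * d ≤ 2 * #(S \ (X ∪ Y)) + (#(X \ Y) - 1) :=
    hor.two_mul_le_card_biUnion_outNbrs_sdiff hδ.le_card_outNbrs h hX
  have hR : 2 * d ≤ 2 * #(R \ (X ∪ Y)) + (#(Y \ X) - 1) := by
    rw [union_comm]
    exact hor.flip.two_mul_le_card_biUnion_outNbrs_sdiff hδ.le_card_inNbrs
      (fun c hc b a ha hbc hab ↦ h a ha b c hc hab hbc) (spansEdge_flip.2 hY)
  have htotal : #(X ∪ Y) + #(S \ (X ∪ Y)) + #(R \ (X ∪ Y)) ≤ Fintype.card V :=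
    card_add_card_sdiff_add_card_sdiff_le hSR (X ∪ Y)
  have hunionX : #(X ∪ Y) = #(Y \ X) + #X := by rw [union_comm, card_sdiff_add_card]
  have hunionY : #(X ∪ Y) = #(X \ Y) + #Y := (card_sdiff_add_card X Y).symm
  have hdiff : #(X \ Y) = 0 → #(Y \ X) = 0 → d ≤ #X := by
    simp only [card_eq_zero, sdiff_eq_empty_iff_subset]
    exact fun hXsub hYsub ↦ hXY (hXsub.antisymm hYsub)
  omega

theorem IsOriented.exists_adj_or_adj_of_le_card (hor : IsOriented G) (hδ : HasMinSemidegree G d)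
    (hd : Fintype.card V < 3 * d) {Z : Finset V} (hZ : d ≤ #Z) (v : V) :
    ∃ w ∈ Z, G v w ∨ G w v := by
  classical
  by_contra! h
  have hdisj : Disjoint (outNbrs G v ∪ inNbrs G v) Z := by
    simpa [disjoint_right] using h
  have hle := card_le_univ (outNbrs G v ∪ inNbrs G v ∪ Z)
  rw [card_union_of_disjoint hdisj, card_union_of_disjoint (hor.disjoint_outNbrs_inNbrs v)] at hle
  linarith [hδ.le_card_outNbrs v, hδ.le_card_inNbrs v]

theorem IsOriented.spansEdge_of_le_card (hor : IsOriented G) (hδ : HasMinSemidegree G d)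
    (hd : Fintype.card V < 3 * d) {Z : Finset V} (hZ : d ≤ #Z) : SpansEdge G Z := by
  obtain ⟨v, hv⟩ : Z.Nonempty := card_pos.1 (by omega)
  obtain ⟨w, hw, hvw | hwv⟩ := hor.exists_adj_or_adj_of_le_card hδ hd hZ v
  exacts [⟨v, hv, w, hw, hvw⟩, ⟨w, hw, v, hv, hwv⟩]

theorem IsOriented.hasDirectedCycle_four [Nonempty V] (hor : IsOriented G)
    (hδ : HasMinSemidegree G d) (hd : Fintype.card V < 3 * d) : HasDirectedCycle G 4 := by
  obtain ⟨x⟩ := ‹Nonempty V›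
  obtain ⟨a, hxa, b, c, hcx, hab, hbc⟩ := hor.exists_adj_adj_of_spansEdge hδ hd
    (le_add_right (hδ.le_card_outNbrs x)) (le_add_right (hδ.le_card_inNbrs x))
    (hor.spansEdge_of_le_card hδ hd (hδ.le_card_outNbrs x))
    (hor.spansEdge_of_le_card hδ hd (hδ.le_card_inNbrs x)) fun _ ↦ hδ.le_card_outNbrs x
  rw [mem_outNbrs] at hxa
  rw [mem_inNbrs] at hcx
  refine hasDirectedCycle_of_isChain (a := x) (l := [a, b, c]) (by simp [*]) ?_
  simp [hor.ne hxa, hor.ne_of_adj_adj hxa hab, (hor.ne hcx).symm, hor.ne hab,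
    hor.ne_of_adj_adj hab hbc, hor.ne hbc]

theorem IsOriented.rightUnique_not_spansEdge_erase [DecidableEq V] (hor : IsOriented G)
    (hδ : HasMinSemidegree G d) (hd : Fintype.card V < 3 * d) (hd3 : 3 ≤ d) :
    Relator.RightUnique fun x y ↦ ¬ SpansEdge G ((outNbrs G x).erase y) := by
  intro x y z hy hz
  by_contra hyz
  obtain ⟨v, hv, hvyz⟩ : ∃ v ∈ outNbrs G x, v ∉ ({y, z} : Finset V) :=
    exists_mem_notMem_of_card_lt_card (card_le_two.trans_lt (hd3.trans (hδ.le_card_outNbrs x)))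
  obtain ⟨w, hw, hvw⟩ := hor.exists_adj_or_adj_of_le_card hδ hd (hδ.le_card_outNbrs x) v
  rw [mem_insert, mem_singleton, not_or] at hvyz
  have hspan : ∀ t, v ≠ t → w ≠ t → SpansEdge G ((outNbrs G x).erase t) := fun t hvt hwt ↦
    hvw.elim (fun h ↦ ⟨v, mem_erase.2 ⟨hvt, hv⟩, w, mem_erase.2 ⟨hwt, hw⟩, h⟩)
      fun h ↦ ⟨w, mem_erase.2 ⟨hwt, hw⟩, v, mem_erase.2 ⟨hvt, hv⟩, h⟩
  by_cases hwy : w = y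
  · exact hz (hspan z hvyz.2 (hwy ▸ hyz))
  · exact hy (hspan y hvyz.1 hwy)

theorem IsOriented.leftUnique_not_spansEdge_erase [DecidableEq V] (hor : IsOriented G)
    (hδ : HasMinSemidegree G d) (hd : Fintype.card V < 3 * d) (hd3 : 3 ≤ d) :
    Relator.LeftUnique fun x y ↦ ¬ SpansEdge G ((inNbrs G y).erase x) := fun _ _ _ hx hz ↦
  hor.flip.rightUnique_not_spansEdge_erase hδ.flip hd hd3
    (mt spansEdge_flip.1 hx) (mt spansEdge_flip.1 hz)

theorem IsOriented.rightUnique_adj_and_erase_eq [DecidableEq V] (hor : IsOriented G) :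
    Relator.RightUnique fun x y ↦ G x y ∧ (outNbrs G x).erase y = (inNbrs G y).erase x := by
  rintro x y z ⟨hxy, hy⟩ ⟨hxz, hz⟩
  by_contra hne
  have hzy : z ∈ (inNbrs G y).erase x := hy ▸ mem_erase.2 ⟨Ne.symm hne, mem_outNbrs.2 hxz⟩
  have hyz : y ∈ (inNbrs G z).erase x := hz ▸ mem_erase.2 ⟨hne, mem_outNbrs.2 hxy⟩
  exact hor z y (mem_inNbrs.1 (mem_of_mem_erase hzy)) (mem_inNbrs.1 (mem_of_mem_erase hyz))

theorem IsOriented.exists_isDirectedPath_four [DecidableEq V] (hor : IsOriented G)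
    (hδ : HasMinSemidegree G d) (hd : Fintype.card V < 3 * d) {x y : V} (hxy : x ≠ y)
    (hx : SpansEdge G ((outNbrs G x).erase y)) (hy : SpansEdge G ((inNbrs G y).erase x))
    (hne : G x y → (outNbrs G x).erase y ≠ (inNbrs G y).erase x) :
    ∃ a b c, IsDirectedPath G [x, a, b, c, y] := by
  have hxcard : d ≤ #((outNbrs G x).erase y) + 1 :=
    (hδ.le_card_outNbrs x).trans (Nat.sub_le_iff_le_add.1 pred_card_le_card_erase)
  have hycard : d ≤ #((inNbrs G y).erase x) + 1 :=
    (hδ.le_card_inNbrs y).trans (Nat.sub_le_iff_le_add.1 pred_card_le_card_erase)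
  have heq : (outNbrs G x).erase y = (inNbrs G y).erase x → d ≤ #((outNbrs G x).erase y) := by
    intro h
    have hyx : y ∉ outNbrs G x := fun hadj ↦ hne (mem_outNbrs.1 hadj) h
    exact (erase_eq_of_notMem hyx).symm ▸ hδ.le_card_outNbrs x
  obtain ⟨a, ha, b, c, hc, hab, hbc⟩ :=
    hor.exists_adj_adj_of_spansEdge hδ hd hxcard hycard hx hy heq
  obtain ⟨hay, hxa⟩ : a ≠ y ∧ G x a := by simpa using ha
  obtain ⟨hcx, hcy⟩ : c ≠ x ∧ G c y := by simpa using hc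
  refine ⟨a, b, c, by simp [*], ?_⟩
  simp [hor.ne hxa, hor.ne_of_adj_adj hxa hab, hcx.symm, hxy, hor.ne hab,
    hor.ne_of_adj_adj hab hbc, hay, hor.ne hbc, hor.ne_of_adj_adj hbc hcy, hor.ne hcy]

theorem IsOriented.exists_mem_isDirectedPath_four [Nonempty V] (hor : IsOriented G)
    (hδ : HasMinSemidegree G d) (hd : Fintype.card V < 3 * d) (hd3 : 3 ≤ d) (A : V → Finset V)
    (hA : ∀ x, 5 ≤ #(A x)) :
    ∃ x, ∃ y ∈ A x, ∃ a b c, IsDirectedPath G [x, a, b, c, y] := by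
  classical
  obtain ⟨x, y, hy, hspanx, hspany, hne⟩ := exists_mem_not_of_rightUnique_of_leftUnique
    (hor.rightUnique_not_spansEdge_erase hδ hd hd3) (hor.leftUnique_not_spansEdge_erase hδ hd hd3)
    hor.rightUnique_adj_and_erase_eq (fun x ↦ (A x).erase x)
    fun x ↦ (Nat.sub_le_sub_right (hA x) 1).trans pred_card_le_card_erase
  rw [mem_erase] at hy
  exact ⟨x, y, hy.2, hor.exists_isDirectedPath_four hδ hd hy.1.symm
    (not_not.1 hspanx) (not_not.1 hspany) (not_and.1 hne)⟩

open Classical in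
/-- The vertices with at least `K` outneighbours in `A`. Iterated, this yields the vertices from
which one can walk into `A` with at least `K` choices at each step. -/
noncomputable def robustPreds (G : V → V → Prop) (K : ℕ) (A : Finset V) : Finset V :=
  {v | K ≤ #{u ∈ A | G v u}}

theorem card_mul_le_card_robustPreds_mul_add (hin : ∀ x, d ≤ #(inNbrs G x)) (K : ℕ)
    (A : Finset V) : #A * d ≤ #(robustPreds G K A) * #A + Fintype.card V * K := by
  classical
  set B := robustPreds G K A with hB
  have hfew : ∀ v ∈ Bᶜ, #{u ∈ A | G v u} ≤ K := fun v hv ↦ by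
    simp only [hB, robustPreds, mem_compl, mem_filter, mem_univ, true_and, not_le] at hv
    exact hv.le
  calc #A * d
      ≤ ∑ u ∈ A, #(inNbrs G u) := card_nsmul_le_sum A _ d fun u _ ↦ hin u
    _ = ∑ v : V, #{u ∈ A | G v u} := sum_card_bipartiteAbove_eq_sum_card_bipartiteBelow (flip G)
    _ = ∑ v ∈ B, #{u ∈ A | G v u} + ∑ v ∈ Bᶜ, #{u ∈ A | G v u} := (sum_add_sum_compl B _).symm
    _ ≤ #B * #A + #Bᶜ * K :=
        add_le_add (sum_le_card_nsmul B _ _ fun v _ ↦ card_filter_le _ _)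
          (sum_le_card_nsmul Bᶜ _ _ hfew)
    _ ≤ #B * #A + Fintype.card V * K := by gcongr; exact card_le_univ _

theorem card_le_six_mul_card_robustPreds (hd : Fintype.card V < 3 * d)
    (hK : 36 * K ≤ Fintype.card V) (hin : ∀ x, d ≤ #(inNbrs G x)) {A : Finset V}
    (hA : Fintype.card V ≤ 6 * #A) : Fintype.card V ≤ 6 * #(robustPreds G K A) := by
  rcases Nat.eq_zero_or_pos #A with hA₀ | hA₀
  · omega
  -- Hence `#(robustPreds G K A) ≥ d - 6 * K`, which is at least `n / 3 - n / 6`.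
  have hmul : #A * d ≤ #A * (#(robustPreds G K A) + 6 * K) := by
    nlinarith [card_mul_le_card_robustPreds_mul_add hin K A]
  have := Nat.le_of_mul_le_mul_left hmul hA₀
  omega

theorem card_le_six_mul_card_robustPreds_iterate (hd : Fintype.card V < 3 * d)
    (hK : 36 * K ≤ Fintype.card V) (hin : ∀ x, d ≤ #(inNbrs G x)) (x : V) (j : ℕ) :
    Fintype.card V ≤ 6 * #((robustPreds G K)^[j] (inNbrs G x)) := by
  induction j with
  | zero =>
    have := hin x
    rw [Function.iterate_zero_apply]
    omega
  | succ j ih =>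
    rw [Function.iterate_succ_apply']
    exact card_le_six_mul_card_robustPreds hd hK hin ih

theorem IsOriented.exists_isDirectedPath_of_mem_robustPreds_iterate (hor : IsOriented G)
    {x y : V} {j : ℕ} (hy : y ∈ (robustPreds G K)^[j] (inNbrs G x)) (hyx : y ≠ x) {F : Finset V}
    (hF : #F + j < K) :
    ∃ l : List V, l.length = j ∧ IsDirectedPath G (y :: (l ++ [x])) ∧ ∀ v ∈ l, v ∉ F := by
  classical
  induction j generalizing y F with
  | zero =>
    have hadj : G y x := by simpa using hy
    exact ⟨[], rfl, ⟨by simpa using hadj, by simpa using hyx⟩, by simp⟩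
  | succ j ih =>
    rw [Function.iterate_succ_apply', robustPreds, mem_filter] at hy
    obtain ⟨z, hz, hzF⟩ := exists_mem_notMem_of_card_lt_card
      (((card_insert_le x F).trans_lt (by omega)).trans_le hy.2)
    rw [mem_filter] at hz
    rw [mem_insert, not_or] at hzF
    obtain ⟨l, hl, hpath, hlF⟩ := ih hz.1 hzF.1 (F := insert y F)
      (by have := card_insert_le y F; omega)
    simp only [mem_insert, not_or] at hlF
    refine ⟨z :: l, by simp [hl], ⟨?_, ?_⟩, by simpa [hzF.2] using fun v hv ↦ (hlF v hv).2⟩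
    · exact List.isChain_cons_cons.2 ⟨hz.2, hpath.isChain⟩
    · refine List.nodup_cons.2 ⟨?_, hpath.nodup⟩
      simpa [hor.ne hz.2, hyx] using fun h ↦ (hlF y h).1 rfl

theorem IsOriented.hasDirectedCycle_add_five [Nonempty V] {j : ℕ} (hor : IsOriented G)
    (hδ : HasMinSemidegree G d) (hd : Fintype.card V < 3 * d)
    (hn : 36 * (j + 5) ≤ Fintype.card V) : HasDirectedCycle G (j + 5) := by
  classical
  obtain ⟨x, y, hy, a, b, c, hp⟩ := hor.exists_mem_isDirectedPath_four hδ hd (by omega)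
    (fun x ↦ (robustPreds G (j + 5))^[j] (inNbrs G x)) fun x ↦ by
      have := card_le_six_mul_card_robustPreds_iterate hd hn hδ.le_card_inNbrs x j
      omega
  have hyx : y ≠ x := by
    rintro rfl
    simpa using hp.nodup
  obtain ⟨l, rfl, hq, hl⟩ := hor.exists_isDirectedPath_of_mem_robustPreds_iterate hy hyx
    (F := {a, b, c}) (by have := card_le_three (a := a) (b := b) (c := c); omega)
  have hdisj : [a, b, c].Disjoint l := fun v hv hvl ↦ hl v hvl (by simpa using hv)
  have hcycle := IsDirectedPath.hasDirectedCycle (p := [a, b, c]) hp hq hdisj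
  rwa [show [a, b, c].length + l.length + 2 = l.length + 5 by simp; omega] at hcycle

theorem oriented_short_cycle_general {ℓ : ℕ} (hℓ : 4 ≤ ℓ) (hor : IsOriented G)
    (hn : 36 * ℓ ≤ Fintype.card V) (hδ : HasMinSemidegree G d) (hd : Fintype.card V < 3 * d) :
    HasDirectedCycle G ℓ := by
  have : Nonempty V := Fintype.card_pos_iff.1 (by omega)
  obtain rfl | hℓ := hℓ.eq_or_lt
  · exact hor.hasDirectedCycle_four hδ hd
  · obtain ⟨j, rfl⟩ := Nat.exists_eq_add_of_le' hℓ
    exact hor.hasDirectedCycle_add_five hδ hd hn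

end ShortCycles

/-- For every ℓ ≥ 4 and n ≥ 10¹⁰·ℓ, every oriented graph on n vertices with minimum
semidegree at least ⌊n/3⌋ + 1 contains a directed cycle of length exactly ℓ. -/
theorem oriented_short_cycle (ℓ : ℕ) (hℓ : 4 ≤ ℓ)
    (V : Type) [Fintype V] (G : V → V → Prop)
    (hor : IsOriented G)
    (hn : 10 ^ 10 * ℓ ≤ Fintype.card V)
    (hdeg : ∀ x : V, Fintype.card V / 3 + 1 ≤ outDeg G x ∧
      Fintype.card V / 3 + 1 ≤ inDeg G x) :
    ∃ g : ZMod ℓ → V, Function.Injective g ∧ ∀ i, G (g i) (g (i + 1)) :=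
  oriented_short_cycle_general hℓ hor (by omega) hdeg (by omega)
end
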